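/- Let α be a temperate distribution on ℝ such that both Λ = supp(α) and S = supp(α̂) are uniformly discrete sets. Then Λ is contained in a finite union of translates of a single lattice L = cℤ (c > 0). -/

import Mathlib

open MeasureTheory SchwartzMap Complex Filter

noncomputable section

/-- Tempered distributions on ℝ. -/
abbrev TemperedDist := SchwartzMap ℝ ℂ →L[ℂ] ℂ

/-- Fourier transform of a tempered distribution. -/
def fourierTD (α : TemperedDist) : TemperedDist :=
  α.comp (SchwartzMap.fourierTransformCLM ℂ)

/-- Action of the p-th derivative of the Dirac delta at x on a test function. -/
def diracDeriv (p : ℕ) (x : ℝ) (φ : SchwartzMap ℝ ℂ) : ℂ :=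
  (-1 : ℂ) ^ p * iteratedDeriv p (⇑φ) x

/-- Support of a tempered distribution. -/
def TDsupport (α : TemperedDist) : Set ℝ :=
  {x : ℝ | ∀ U : Set ℝ, IsOpen U → x ∈ U →
    ∃ φ : SchwartzMap ℝ ℂ, tsupport ⇑φ ⊆ U ∧ α φ ≠ 0}

/-- Uniformly discrete set. -/
def UniformlyDiscrete (Λ : Set ℝ) : Prop :=
  ∃ δ > (0:ℝ), ∀ x ∈ Λ, ∀ y ∈ Λ, x ≠ y → δ ≤ |x - y|

/-- Counting function. -/
def countFn (Λ : Set ℝ) (r : ℝ) : ℝ := (Λ ∩ Set.Icc (-r) r).ncard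

/-- Logarithmic lower density. -/
def DK (Λ : Set ℝ) : ℝ :=
  liminf (fun R : ℝ => (1 / (2 * R)) * ∫ r in (1:ℝ)..R, countFn Λ r / r) atTop

/-- Locally finite set. -/
def LocallyFinite' (Λ : Set ℝ) : Prop :=
  ∀ K : Set ℝ, IsCompact K → (Λ ∩ K).Finite

/-!
Uniformly discrete supports make `α` and its Fourier transform absolutely convergent sums of
derivatives of Dirac masses. Testing the sum for the Fourier transform against band-limited
functions that isolate a single one of its points shows that the support `Λ` of `α` meets every
interval of some fixed length. Correlating two modulated copies of the sum for `α` shows moreover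
that, for each difference `h` of two points of `Λ`, the set `Λ` and its translate by `h` almost
agree on a set of points whose density is bounded below independently of `h`.

A packing argument then bounds the density of `Λ - Λ`, so the group generated by `Λ - Λ` is finitely
generated. An additive function `f` on it takes boundedly many values on nearby differences, hence
is quasi-linear: `f - l * x` is bounded on `Λ - Λ` for some `l`. A difference `h` that nearly
maximizes `f - l * x` forces this function to be almost constant on the points of `Λ` that return
under translation by `h`; since these have positive density, `f - l * x` takes only finitely many
values on `Λ`. For `f` an unbounded integer coordinate, `l ≠ 0` and each fibre lies in a translate
of `l⁻¹ℤ`.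
-/

open Set Metric
open scoped Topology ContDiff FourierTransform Pointwise

section Bounds

/-- `HasJetBound n f x B w`: the derivatives of `f` of order at most `n` at `x` are bounded by a
geometric sequence with ratio `B` and initial value `w`. -/
def HasJetBound (n : ℕ) (f : ℝ → ℂ) (x B w : ℝ) : Prop :=
  ∀ j ≤ n, ‖iteratedDeriv j f x‖ ≤ B ^ j * w

/-- `HasWeightedBound k n f B`: the derivatives of `f` of order at most `n`, multiplied by the
weight `(1 + |x|) ^ k`, are bounded by `B`. These are the continuous norms on Schwartz space. -/
def HasWeightedBound (k n : ℕ) (f : ℝ → ℂ) (B : ℝ) : Prop :=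
  ∀ j ≤ n, ∀ x : ℝ, (1 + |x|) ^ k * ‖iteratedDeriv j f x‖ ≤ B

/-- `HasOrderBound α k n C`: the distribution `α` has order at most `n` and growth exponent at most
`k`, with constant `C`. -/
def HasOrderBound (α : TemperedDist) (k n : ℕ) (C : ℝ) : Prop :=
  ∀ (φ : 𝓢(ℝ, ℂ)) (B : ℝ), HasWeightedBound k n φ B → ‖α φ‖ ≤ C * B

variable {k n : ℕ} {f g : ℝ → ℂ} {x B B₁ B₂ w w₁ w₂ C : ℝ}

lemma HasJetBound.mul (hf : ContDiff ℝ ∞ f) (hg : ContDiff ℝ ∞ g) (hB₁ : 0 ≤ B₁) (hw₁ : 0 ≤ w₁)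
    (h₁ : HasJetBound n f x B₁ w₁) (h₂ : HasJetBound n g x B₂ w₂) :
    HasJetBound n (f * g) x (B₁ + B₂) (w₁ * w₂) := by
  intro j hj
  have hj' : ((j : ℕ) : WithTop ℕ∞) ≤ ∞ := by exact_mod_cast le_top
  rw [iteratedDeriv_mul (hf.of_le hj').contDiffAt (hg.of_le hj').contDiffAt, add_pow,
    Finset.sum_mul]
  refine norm_sum_le_of_le _ fun i hi => ?_
  have hi' : i ≤ j := Finset.mem_range_succ_iff.1 hi
  have h₁i := h₁ i (hi'.trans hj)
  have h₂i := h₂ (j - i) (by omega)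
  rw [norm_mul, norm_mul, Complex.norm_natCast]
  calc (j.choose i : ℝ) * ‖iteratedDeriv i f x‖ * ‖iteratedDeriv (j - i) g x‖
      ≤ (j.choose i : ℝ) * (B₁ ^ i * w₁) * (B₂ ^ (j - i) * w₂) := by gcongr
    _ = B₁ ^ i * B₂ ^ (j - i) * (j.choose i : ℝ) * (w₁ * w₂) := by ring

lemma HasWeightedBound.nonneg (h : HasWeightedBound k n f B) : 0 ≤ B :=
  le_trans (by positivity) (h 0 n.zero_le 0)

lemma HasWeightedBound.mono {k' : ℕ} (h : HasWeightedBound k' n f B) (hk : k ≤ k') :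
    HasWeightedBound k n f B := fun j hj x =>
  le_trans (by gcongr; linarith [abs_nonneg x]) (h j hj x)

lemma HasWeightedBound.hasJetBound (h : HasWeightedBound k n f B) (x : ℝ) :
    HasJetBound n f x 1 (B / (1 + |x|) ^ k) := fun j hj => by
  rw [one_pow, one_mul, le_div_iff₀' (by positivity)]
  exact h j hj x

lemma exists_hasWeightedBound (φ : 𝓢(ℝ, ℂ)) (k n : ℕ) : ∃ B, HasWeightedBound k n φ B :=
  ⟨2 ^ k * ((Finset.Iic (k, n)).sup fun m => SchwartzMap.seminorm ℂ m.1 m.2) φ, fun j hj x => by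
    simpa only [norm_iteratedFDeriv_eq_norm_iteratedDeriv, Real.norm_eq_abs] using
      SchwartzMap.one_add_le_sup_seminorm_apply (𝕜 := ℂ) (m := (k, n)) le_rfl hj φ x⟩

lemma exists_pos_hasWeightedBound (φ : 𝓢(ℝ, ℂ)) (k n : ℕ) : ∃ B > 0, HasWeightedBound k n φ B := by
  obtain ⟨B, hB⟩ := exists_hasWeightedBound φ k n
  exact ⟨B + 1, by linarith [hB.nonneg], fun j hj x => (hB j hj x).trans (by linarith)⟩

lemma exists_hasOrderBound (α : TemperedDist) : ∃ k n C, HasOrderBound α k n C := by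
  obtain ⟨s, C, -, hs⟩ := Seminorm.bound_of_continuous (schwartz_withSeminorms ℂ ℝ ℂ)
    ((normSeminorm ℂ ℂ).comp α.toLinearMap) (by
      change Continuous fun φ => ‖α φ‖
      fun_prop)
  refine ⟨s.sup Prod.fst, s.sup Prod.snd, C, fun φ B hB => (hs φ).trans ?_⟩
  refine mul_le_mul_of_nonneg_left (Seminorm.finset_sup_apply_le hB.nonneg fun i hi => ?_) C.2
  refine SchwartzMap.seminorm_le_bound' ℂ i.1 i.2 φ hB.nonneg fun x => ?_
  refine le_trans ?_ (hB i.2 (Finset.le_sup (f := Prod.snd) hi) x)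
  have h₁ : 1 ≤ 1 + |x| := by linarith [abs_nonneg x]
  gcongr
  calc |x| ^ i.1 ≤ (1 + |x|) ^ i.1 := by gcongr; linarith
    _ ≤ (1 + |x|) ^ s.sup Prod.fst := by
      gcongr
      exact Finset.le_sup (f := Prod.fst) hi

lemma eq_zero_of_eventually_norm_le_mul {E : Type*} [NormedAddCommGroup E] {z : E}
    (h : ∀ᶠ ε in 𝓝[>] (0 : ℝ), ‖z‖ ≤ C * ε) : z = 0 := by
  have hlim : Tendsto (fun ε : ℝ => C * ε) (𝓝[>] 0) (𝓝 0) := by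
    simpa using ((continuous_const_mul C).tendsto 0).mono_left nhdsWithin_le_nhds
  exact norm_le_zero_iff.1 (ge_of_tendsto hlim h)

end Bounds

section Cutoff

variable {l x ρ : ℝ} {n : ℕ}

/-- The bump function at `l` equal to `1` on the ball of radius `ρ` and supported in the ball of
radius `2 * ρ`; the ratio of the radii is fixed so that all of these are rescaled translates of a
single function. -/
def bumpAt (l : ℝ) (hρ : 0 < ρ) : ContDiffBump l :=
  ⟨ρ, 2 * ρ, hρ, by linarith⟩

lemma bumpAt_apply (hρ : 0 < ρ) (x : ℝ) :
    bumpAt l hρ x = bumpAt 0 one_pos (ρ⁻¹ * (x - l)) := by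
  have h : 2 * ρ / ρ = 2 * 1 / 1 := by field_simp
  simp only [ContDiffBump.apply, bumpAt, h, smul_eq_mul, inv_one, one_mul, sub_zero]

/-- The bump function `bumpAt l hρ` as a complex-valued Schwartz function. -/
def cutoff (l : ℝ) (hρ : 0 < ρ) : 𝓢(ℝ, ℂ) :=
  ((bumpAt l hρ).hasCompactSupport.comp_left (g := ofReal) ofReal_zero).toSchwartzMap
    (ofRealCLM.contDiff.comp (bumpAt l hρ).contDiff)

lemma cutoff_apply (hρ : 0 < ρ) (x : ℝ) : cutoff l hρ x = bumpAt l hρ x := rfl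

lemma cutoff_eventuallyEq_one (hρ : 0 < ρ) (hx : |x - l| < ρ) : cutoff l hρ =ᶠ[𝓝 x] 1 := by
  filter_upwards [(bumpAt l hρ).eventuallyEq_one_of_mem_ball (x := x) hx] with y hy
  simp [cutoff_apply, hy]

lemma cutoff_eq_one (hρ : 0 < ρ) (hx : |x - l| ≤ ρ) : cutoff l hρ x = 1 := by
  rw [cutoff_apply, (bumpAt l hρ).one_of_mem_closedBall (x := x) hx, ofReal_one]

lemma hasCompactSupport_cutoff (hρ : 0 < ρ) : HasCompactSupport (cutoff l hρ) :=
  (bumpAt l hρ).hasCompactSupport.comp_left (g := ofReal) ofReal_zero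

lemma tsupport_cutoff_subset (hρ : 0 < ρ) : tsupport (cutoff l hρ) ⊆ closedBall l (2 * ρ) :=
  (closure_mono (Function.support_comp_subset ofReal_zero _)).trans (bumpAt l hρ).tsupport_eq.subset

lemma iteratedDeriv_cutoff (hρ : 0 < ρ) (j : ℕ) (x : ℝ) :
    iteratedDeriv j (cutoff l hρ) x =
      (ρ⁻¹ : ℝ) ^ j * iteratedDeriv j (cutoff 0 one_pos) (ρ⁻¹ * (x - l)) := by
  have hcomp : ⇑(cutoff l hρ) = fun y => (fun z => cutoff 0 one_pos (ρ⁻¹ * z)) (y - l) :=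
    funext fun y => congrArg ofReal (bumpAt_apply hρ y)
  rw [hcomp, congrFun (iteratedDeriv_comp_sub_const j (fun z => cutoff 0 one_pos (ρ⁻¹ * z)) l) x,
    iteratedDeriv_comp_const_smul ((cutoff 0 one_pos).smooth _)]
  simp

lemma exists_hasJetBound_cutoff (n : ℕ) :
    ∃ D, 0 ≤ D ∧ ∀ (l ρ : ℝ) (hρ : 0 < ρ) (x : ℝ), HasJetBound n (cutoff l hρ) x ρ⁻¹ D := by
  obtain ⟨D, hD⟩ := exists_hasWeightedBound (cutoff 0 one_pos) 0 n
  refine ⟨D, hD.nonneg, fun l ρ hρ x j hj => ?_⟩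
  rw [iteratedDeriv_cutoff, norm_mul, norm_pow, norm_real, Real.norm_of_nonneg (by positivity)]
  gcongr
  simpa using hD j hj (ρ⁻¹ * (x - l))

/-- Multiplication by `cutoff l hρ`. -/
def localize (l : ℝ) (hρ : 0 < ρ) : 𝓢(ℝ, ℂ) →L[ℂ] 𝓢(ℝ, ℂ) :=
  smulLeftCLM ℂ (cutoff l hρ)

lemma coe_localize (hρ : 0 < ρ) (φ : 𝓢(ℝ, ℂ)) : ⇑(localize l hρ φ) = cutoff l hρ * φ :=
  smulLeftCLM_apply (cutoff l hρ).hasTemperateGrowth φ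

lemma tsupport_localize_subset (hρ : 0 < ρ) (φ : 𝓢(ℝ, ℂ)) :
    tsupport (localize l hρ φ) ⊆ closedBall l (2 * ρ) ∩ tsupport φ := by
  rw [coe_localize]
  exact subset_inter (tsupport_mul_subset_left.trans (tsupport_cutoff_subset hρ))
    tsupport_mul_subset_right

lemma hasCompactSupport_localize (hρ : 0 < ρ) (φ : 𝓢(ℝ, ℂ)) :
    HasCompactSupport (localize l hρ φ) := by
  rw [coe_localize]
  exact (hasCompactSupport_cutoff hρ).mul_right

lemma localize_eventuallyEq_self (hρ : 0 < ρ) (φ : 𝓢(ℝ, ℂ)) (hx : |x - l| < ρ) :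
    localize l hρ φ =ᶠ[𝓝 x] φ := by
  filter_upwards [cutoff_eventuallyEq_one hρ hx] with y hy
  simp [coe_localize, hy]

lemma notMem_tsupport_sub_of_eventuallyEq {φ ψ : 𝓢(ℝ, ℂ)} (h : φ =ᶠ[𝓝 x] ψ) :
    x ∉ tsupport (φ - ψ : 𝓢(ℝ, ℂ)) := by
  rw [notMem_tsupport_iff_eventuallyEq]
  filter_upwards [h] with y hy
  simp [hy]

lemma iteratedDeriv_eq_zero_of_notMem_tsupport {f : ℝ → ℂ} (hx : x ∉ tsupport f) (j : ℕ) :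
    iteratedDeriv j f x = 0 := by
  rw [(notMem_tsupport_iff_eventuallyEq.1 hx).iteratedDeriv_eq]
  exact (iteratedDeriv_const (c := (0 : ℂ))).trans (ite_self 0)

lemma iteratedDeriv_schwartz_sub (φ ψ : 𝓢(ℝ, ℂ)) (j : ℕ) (x : ℝ) :
    iteratedDeriv j (φ - ψ : 𝓢(ℝ, ℂ)) x = iteratedDeriv j φ x - iteratedDeriv j ψ x :=
  iteratedDeriv_sub (φ.smooth _).contDiffAt (ψ.smooth _).contDiffAt

lemma exists_hasWeightedBound_sub_localize (φ : 𝓢(ℝ, ℂ)) (k n : ℕ) :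
    ∃ A, ∀ (R : ℝ) (hR : 0 < R), 1 ≤ R →
      HasWeightedBound k n (φ - localize 0 hR φ : 𝓢(ℝ, ℂ)) (A / R) := by
  obtain ⟨D, hD₀, hD⟩ := exists_hasJetBound_cutoff n
  obtain ⟨B, hB⟩ := exists_hasWeightedBound φ (k + 1) n
  have hB₀ := hB.nonneg
  refine ⟨(1 + 2 ^ n * D) * B, fun R hR hR₁ j hj x => ?_⟩
  rcases lt_or_ge |x| R with hx | hx
  · have hloc : φ =ᶠ[𝓝 x] localize 0 hR φ :=
      (localize_eventuallyEq_self hR φ (by simpa using hx)).symm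
    rw [iteratedDeriv_eq_zero_of_notMem_tsupport (notMem_tsupport_sub_of_eventuallyEq hloc)]
    simp only [norm_zero, mul_zero]
    positivity
  · set b := B / (1 + |x|) ^ (k + 1) with hb
    have hφ : ‖iteratedDeriv j φ x‖ ≤ b := by simpa using hB.hasJetBound x j hj
    have hloc : ‖iteratedDeriv j (localize 0 hR φ) x‖ ≤ 2 ^ n * (D * b) := by
      rw [coe_localize]
      refine ((hD 0 R hR x).mul ((cutoff 0 hR).smooth ⊤) (φ.smooth ⊤) (by positivity) hD₀
        (hB.hasJetBound x) j hj).trans ?_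
      have hR' : R⁻¹ + 1 ≤ 2 := by linarith [inv_le_one_of_one_le₀ hR₁]
      gcongr
      exact (pow_le_pow_left₀ (by positivity) hR' j).trans (pow_le_pow_right₀ one_le_two hj)
    calc (1 + |x|) ^ k * ‖iteratedDeriv j (φ - localize 0 hR φ : 𝓢(ℝ, ℂ)) x‖
        ≤ (1 + |x|) ^ k * (b + 2 ^ n * (D * b)) := by
          rw [iteratedDeriv_schwartz_sub]
          gcongr
          exact (norm_sub_le _ _).trans (add_le_add hφ hloc)
      _ = (1 + 2 ^ n * D) * B / (1 + |x|) := by rw [hb, pow_succ]; field_simp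
      _ ≤ (1 + 2 ^ n * D) * B / R := by gcongr; linarith

lemma exists_hasCompactSupport_approx (φ : 𝓢(ℝ, ℂ)) (k n : ℕ) {ε : ℝ} (hε : 0 < ε) :
    ∃ ψ : 𝓢(ℝ, ℂ), HasCompactSupport ψ ∧ tsupport ψ ⊆ tsupport φ ∧
      HasWeightedBound k n (φ - ψ : 𝓢(ℝ, ℂ)) ε := by
  obtain ⟨A, hA⟩ := exists_hasWeightedBound_sub_localize φ k n
  have hR : 1 ≤ max 1 (A / ε) := le_max_left _ _
  have hR₀ : 0 < max 1 (A / ε) := one_pos.trans_le hR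
  refine ⟨localize 0 hR₀ φ, hasCompactSupport_localize hR₀ φ,
    (tsupport_localize_subset hR₀ φ).trans inter_subset_right, fun j hj x =>
      (hA _ hR₀ hR j hj x).trans ?_⟩
  rw [div_le_iff₀ hR₀, ← div_le_iff₀' hε]
  exact le_max_right _ _

end Cutoff

section Support

variable {α : TemperedDist} {φ : 𝓢(ℝ, ℂ)}

open scoped Manifold in
lemma apply_eq_zero_of_disjoint_of_hasCompactSupport (hφ : HasCompactSupport φ)
    (h : Disjoint (tsupport φ) (TDsupport α)) : α φ = 0 := by
  have hnull : ∀ x : tsupport φ, ∃ U : Set ℝ, IsOpen U ∧ x.1 ∈ U ∧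
      ∀ ψ : 𝓢(ℝ, ℂ), tsupport ψ ⊆ U → α ψ = 0 := fun x => by
    have hx : x.1 ∉ TDsupport α := disjoint_left.1 h x.2
    simp only [TDsupport, mem_ofPred_eq] at hx
    push Not at hx
    exact hx
  choose U hUo hxU hU using hnull
  obtain ⟨f, hf⟩ := SmoothPartitionOfUnity.exists_isSubordinate 𝓘(ℝ) (isClosed_tsupport φ) U hUo
    fun x hx => mem_iUnion.2 ⟨⟨x, hx⟩, hxU _⟩
  have hfin : {i | (Function.support (f i) ∩ tsupport φ).Nonempty}.Finite :=
    f.locallyFinite.finite_nonempty_inter_compact hφ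
  let piece (i) : 𝓢(ℝ, ℂ) := (hφ.mul_left (f := fun x => (f i x : ℂ))).toSchwartzMap
    ((ofRealCLM.contDiff.comp (f i).contMDiff.contDiff).mul (φ.smooth ⊤))
  have hpiece (i) : α (piece i) = 0 := hU i _ <| by
    refine tsupport_mul_subset_left.trans (subset_trans ?_ (hf i))
    exact closure_mono (Function.support_comp_subset ofReal_zero _)
  have hsum : φ = ∑ i ∈ hfin.toFinset, piece i := by
    ext x
    have hpx (i) : piece i x = f i x * φ x := rfl
    simp only [_root_.sum_apply, hpx, ← Finset.sum_mul]
    by_cases hx : x ∈ tsupport φ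
    · have hone : ∑ i ∈ hfin.toFinset, f i x = 1 := f.sum_finsupport' x hx fun i hi => by
        simpa using ⟨x, (f.mem_finsupport x).1 hi, hx⟩
      rw [← ofReal_sum, hone, ofReal_one, one_mul]
    · rw [image_eq_zero_of_notMem_tsupport hx, mul_zero]
  rw [hsum, map_sum]
  exact Finset.sum_eq_zero fun i _ => hpiece i

lemma apply_eq_zero_of_disjoint (h : Disjoint (tsupport φ) (TDsupport α)) : α φ = 0 := by
  obtain ⟨k, n, C, hα⟩ := exists_hasOrderBound α
  refine eq_zero_of_eventually_norm_le_mul (C := C) ?_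
  filter_upwards [self_mem_nhdsWithin] with ε hε
  obtain ⟨ψ, hψ, hsub, happrox⟩ := exists_hasCompactSupport_approx φ k n hε
  have hαψ : α ψ = 0 :=
    apply_eq_zero_of_disjoint_of_hasCompactSupport hψ (h.mono_left hsub)
  simpa [hαψ] using hα _ _ happrox

lemma apply_eq_of_eventuallyEq {ψ : 𝓢(ℝ, ℂ)} (h : ∀ x ∈ TDsupport α, φ =ᶠ[𝓝 x] ψ) :
    α φ = α ψ := by
  rw [← sub_eq_zero, ← map_sub]
  exact apply_eq_zero_of_disjoint <| disjoint_right.2 fun x hx =>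
    notMem_tsupport_sub_of_eventuallyEq (h x hx)

end Support

section Jets

lemma norm_iteratedDeriv_le_mul_abs_pow {ψ : 𝓢(ℝ, ℂ)} {n : ℕ} {l D : ℝ}
    (h₀ : ∀ j ≤ n, iteratedDeriv j ψ l = 0) (hD : ∀ x, ‖iteratedDeriv (n + 1) ψ x‖ ≤ D) :
    ∀ i ≤ n + 1, ∀ x, ‖iteratedDeriv (n + 1 - i) ψ x‖ ≤ D * |x - l| ^ i := by
  intro i
  induction i with
  | zero => simpa using hD
  | succ i ih =>
    intro hi x
    obtain ⟨j, rfl⟩ : ∃ j, n = i + j := ⟨n - i, by omega⟩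
    have ih' := ih (by omega)
    rw [show i + j + 1 - i = j + 1 by omega] at ih'
    rw [show i + j + 1 - (i + 1) = j by omega]
    have hD₀ : 0 ≤ D := (norm_nonneg _).trans (hD 0)
    have hdiff : Differentiable ℝ (iteratedDeriv j ψ) :=
      (ψ.smooth ⊤).differentiable_iteratedDeriv j (by exact_mod_cast WithTop.coe_lt_top j)
    have hmean := (convex_uIcc l x).norm_image_sub_le_of_norm_deriv_le (C := D * |x - l| ^ i)
      (fun y _ => hdiff y) (fun y hy => by
        rw [← iteratedDeriv_succ]
        refine (ih' y).trans
          (mul_le_mul_of_nonneg_left (pow_le_pow_left₀ (abs_nonneg _) ?_ i) hD₀)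
        exact abs_sub_left_of_mem_uIcc hy) left_mem_uIcc right_mem_uIcc
    rw [h₀ j (by omega), sub_zero, Real.norm_eq_abs] at hmean
    rwa [pow_succ, ← mul_assoc]

-- On the support of the cutoff at scale `ρ`, Taylor's formula makes the derivatives of `ψ` of
-- order `j` of size `ρ ^ (n + 1 - j)`, while the cutoff only loses `ρ ^ (-n)`.
lemma exists_hasWeightedBound_localize_le_mul {ψ : 𝓢(ℝ, ℂ)} {n : ℕ} {l : ℝ} (k : ℕ)
    (h₀ : ∀ j ≤ n, iteratedDeriv j ψ l = 0) :
    ∃ A, ∀ (ρ : ℝ) (hρ : 0 < ρ), ρ ≤ 1 → HasWeightedBound k n (localize l hρ ψ) (A * ρ) := by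
  obtain ⟨D₁, hD₁₀, hD₁⟩ := exists_hasJetBound_cutoff n
  obtain ⟨D, hD⟩ := exists_hasWeightedBound ψ 0 (n + 1)
  have hD₀ := hD.nonneg
  refine ⟨(3 + |l|) ^ k * (4 ^ n * 2 * (D * D₁)), fun ρ hρ hρ₁ j hj x => ?_⟩
  by_cases hx : x ∈ tsupport (localize l hρ ψ)
  swap
  · rw [iteratedDeriv_eq_zero_of_notMem_tsupport hx]
    simp only [norm_zero, mul_zero]
    positivity
  have hxl : |x - l| ≤ 2 * ρ := (tsupport_localize_subset hρ ψ hx).1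
  have hψ : HasJetBound n ψ x (2 * ρ)⁻¹ (D * (2 * ρ) ^ (n + 1)) := fun j hj => by
    have htaylor := norm_iteratedDeriv_le_mul_abs_pow h₀
      (fun x => by simpa using hD (n + 1) le_rfl x) (n + 1 - j) (by omega) x
    rw [show n + 1 - (n + 1 - j) = j by omega] at htaylor
    calc _ ≤ D * |x - l| ^ (n + 1 - j) := htaylor
      _ ≤ D * (2 * ρ) ^ (n + 1 - j) := by gcongr
      _ = (2 * ρ)⁻¹ ^ j * (D * (2 * ρ) ^ (n + 1)) := by
        rw [pow_sub₀ _ (by positivity) (by omega), inv_pow]; ring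
  have hratio : (ρ⁻¹ + (2 * ρ)⁻¹) ^ j ≤ (2 * ρ⁻¹) ^ n := by
    have h₁ : (2 * ρ)⁻¹ ≤ ρ⁻¹ := by gcongr; linarith
    have h₂ : 1 ≤ ρ⁻¹ := (one_le_inv₀ hρ).2 hρ₁
    calc (ρ⁻¹ + (2 * ρ)⁻¹) ^ j ≤ (2 * ρ⁻¹) ^ j := by gcongr; linarith
      _ ≤ (2 * ρ⁻¹) ^ n := by gcongr; linarith
  have hx' : |x| ≤ |l| + 2 := by linarith [abs_sub_abs_le_abs_sub x l]
  calc (1 + |x|) ^ k * ‖iteratedDeriv j (localize l hρ ψ) x‖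
      ≤ (3 + |l|) ^ k * ((2 * ρ⁻¹) ^ n * (D₁ * (D * (2 * ρ) ^ (n + 1)))) := by
        rw [coe_localize]
        refine mul_le_mul (pow_le_pow_left₀ (by positivity) (by linarith) k)
          (((hD₁ l ρ hρ x).mul ((cutoff l hρ).smooth ⊤) (ψ.smooth ⊤) (by positivity) hD₁₀ hψ
            j hj).trans ?_) (norm_nonneg _) (by positivity)
        gcongr
    _ = (3 + |l|) ^ k * (4 ^ n * 2 * (D * D₁)) * ρ := by
        rw [pow_succ, mul_pow, mul_pow, inv_pow, show (4 : ℝ) = 2 * 2 by norm_num, mul_pow]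
        field_simp

lemma HasOrderBound.apply_eq_zero_of_jet_eq_zero {α : TemperedDist} {k n : ℕ} {C l : ℝ}
    (hα : HasOrderBound α k n C) {ψ : 𝓢(ℝ, ℂ)} (hs : tsupport ψ ∩ TDsupport α ⊆ {l})
    (h₀ : ∀ j ≤ n, iteratedDeriv j ψ l = 0) : α ψ = 0 := by
  obtain ⟨A, hA⟩ := exists_hasWeightedBound_localize_le_mul k h₀
  refine eq_zero_of_eventually_norm_le_mul (C := C * A) ?_
  filter_upwards [Ioc_mem_nhdsGT one_pos] with ρ hρ
  have hloc : α ψ = α (localize l hρ.1 ψ) := apply_eq_of_eventuallyEq fun x hx => by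
    by_cases hxψ : x ∈ tsupport ψ
    · obtain rfl : x = l := hs ⟨hxψ, hx⟩
      exact (localize_eventuallyEq_self hρ.1 ψ (by simpa using hρ.1)).symm
    · have hxloc : x ∉ tsupport (localize l hρ.1 ψ) := fun h =>
        hxψ (tsupport_localize_subset hρ.1 ψ h).2
      exact (notMem_tsupport_iff_eventuallyEq.1 hxψ).trans
        (notMem_tsupport_iff_eventuallyEq.1 hxloc).symm
  rw [hloc, mul_assoc]
  exact hα _ _ (hA ρ hρ.1 hρ.2)

end Jets

section Separated

/-- `IsSeparatedBy δ Λ`: distinct points of `Λ` are at distance at least `δ`. -/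
def IsSeparatedBy (δ : ℝ) (Λ : Set ℝ) : Prop :=
  ∀ x ∈ Λ, ∀ y ∈ Λ, x ≠ y → δ ≤ |x - y|

variable {δ : ℝ} {Λ : Set ℝ}

lemma IsSeparatedBy.injOn_floor (h : IsSeparatedBy δ Λ) (hδ : 0 < δ) (a : ℝ) :
    InjOn (fun x : ℝ => ⌊(x - a) / δ⌋) Λ := by
  intro x hx y hy hxy
  by_contra hne
  have hlt := Int.abs_sub_lt_one_of_floor_eq_floor hxy
  rw [← sub_div, sub_sub_sub_cancel_right, abs_div, abs_of_pos hδ, div_lt_one hδ] at hlt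
  exact hlt.not_ge (h x hx y hy hne)

lemma mapsTo_floor_Icc (hδ : 0 < δ) (a b : ℝ) :
    MapsTo (fun x : ℝ => ⌊(x - a) / δ⌋) (Λ ∩ Icc a b) (Finset.Icc 0 ⌊(b - a) / δ⌋) := by
  rintro x ⟨-, hax, hxb⟩
  rw [Finset.coe_Icc]
  refine ⟨Int.floor_nonneg.2 (div_nonneg (sub_nonneg.2 hax) hδ.le), Int.floor_le_floor ?_⟩
  gcongr

lemma IsSeparatedBy.finite_inter_Icc (h : IsSeparatedBy δ Λ) (hδ : 0 < δ) (a b : ℝ) :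
    (Λ ∩ Icc a b).Finite :=
  Set.Finite.of_injOn (mapsTo_floor_Icc hδ a b) ((h.injOn_floor hδ a).mono inter_subset_left)
    (Finset.finite_toSet _)

lemma IsSeparatedBy.finite_inter_of_isCompact (h : IsSeparatedBy δ Λ) (hδ : 0 < δ) {K : Set ℝ}
    (hK : IsCompact K) : (Λ ∩ K).Finite :=
  (h.finite_inter_Icc hδ _ _).subset
    (inter_subset_inter_right Λ hK.isBounded.subset_Icc_sInf_sSup)

lemma IsSeparatedBy.ncard_inter_Icc_le (h : IsSeparatedBy δ Λ) (hδ : 0 < δ) {a b : ℝ}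
    (hab : a ≤ b) : ((Λ ∩ Icc a b).ncard : ℝ) ≤ (b - a) / δ + 1 := by
  have hcard := ncard_le_ncard_of_injOn _ (mapsTo_floor_Icc hδ a b)
    ((h.injOn_floor hδ a).mono inter_subset_left) (Finset.finite_toSet _)
  have hnonneg : 0 ≤ ⌊(b - a) / δ⌋ := Int.floor_nonneg.2 (div_nonneg (sub_nonneg.2 hab) hδ.le)
  rw [ncard_coe_finset, ← Nat.cast_le (α := ℤ), Int.card_Icc_of_le _ _ (by omega)] at hcard
  calc ((Λ ∩ Icc a b).ncard : ℝ) ≤ (⌊(b - a) / δ⌋ : ℝ) + 1 := by exact_mod_cast (by omega)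
    _ ≤ (b - a) / δ + 1 := by gcongr; exact Int.floor_le _

lemma summable_int_inv_one_add_abs_sq : Summable fun n : ℤ => ((1 + |(n : ℝ)|) ^ 2)⁻¹ := by
  have hnat : Summable fun n : ℕ => ((1 + (n : ℝ)) ^ 2)⁻¹ := by
    simpa [add_comm] using (summable_nat_add_iff 1).2 (Real.summable_nat_pow_inv.2 one_lt_two)
  exact .of_nat_of_neg (by simpa using hnat) (by simpa using hnat)

lemma IsSeparatedBy.summable_inv_one_add_abs_sq (h : IsSeparatedBy δ Λ) (hδ : 0 < δ) :
    Summable fun l : Λ => ((1 + |(l : ℝ)|) ^ 2)⁻¹ := by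
  have hfloor : Summable fun l : Λ => ((1 + |((⌊((l : ℝ) - 0) / δ⌋ : ℤ) : ℝ)|) ^ 2)⁻¹ :=
    summable_int_inv_one_add_abs_sq.comp_injective (h.injOn_floor hδ 0).injective
  refine .of_nonneg_of_le (fun l => by positivity) (fun l => ?_)
    (hfloor.mul_left ((2 + 1 / δ) ^ 2))
  set n := ⌊((l : ℝ) - 0) / δ⌋
  have hn : |(n : ℝ)| ≤ |(l : ℝ)| / δ + 1 := by
    have h₁ : (n : ℝ) ≤ ((l : ℝ) - 0) / δ := Int.floor_le _
    have h₂ : ((l : ℝ) - 0) / δ < n + 1 := Int.lt_floor_add_one _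
    have h₃ : |((l : ℝ) - 0) / δ| = |(l : ℝ)| / δ := by rw [abs_div, abs_of_pos hδ, sub_zero]
    have h₄ := abs_le.1 h₃.le
    exact abs_le.2 ⟨by linarith, by linarith⟩
  have hle : 1 + |(n : ℝ)| ≤ (2 + 1 / δ) * (1 + |(l : ℝ)|) := by
    have h₁ : (2 + 1 / δ) * (1 + |(l : ℝ)|) = 2 + 1 / δ + 2 * |(l : ℝ)| + |(l : ℝ)| / δ := by ring
    have h₂ : 0 < 1 / δ := by positivity
    linarith [abs_nonneg (l : ℝ)]
  rw [← div_eq_mul_inv, inv_eq_one_div, div_le_div_iff₀ (by positivity) (by positivity), one_mul,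
    ← mul_pow]
  gcongr

end Separated

section LocalMonomial

variable {l ρ : ℝ}

/-- The monomial `(x - l) ^ p` cut off at scale `ρ` around `l`. -/
def localMonomial (l : ℝ) (hρ : 0 < ρ) (p : ℕ) : 𝓢(ℝ, ℂ) :=
  ((hasCompactSupport_cutoff hρ).mul_left
    (f := fun x : ℝ => (x - l) ^ p • (1 : ℂ))).toSchwartzMap
    (ContDiff.mul (by fun_prop) ((cutoff l hρ).smooth ⊤))

lemma localMonomial_apply (hρ : 0 < ρ) (p : ℕ) (x : ℝ) :
    localMonomial l hρ p x = (x - l) ^ p • (1 : ℂ) * cutoff l hρ x := rfl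

lemma tsupport_localMonomial_subset (hρ : 0 < ρ) (p : ℕ) :
    tsupport (localMonomial l hρ p) ⊆ closedBall l (2 * ρ) :=
  tsupport_mul_subset_right.trans (tsupport_cutoff_subset hρ)

lemma localMonomial_eq_comp_sub (hρ : 0 < ρ) (p : ℕ) :
    ⇑(localMonomial l hρ p) = fun x => localMonomial 0 hρ p (x - l) := by
  ext x
  rw [localMonomial_apply, localMonomial_apply, cutoff_apply, cutoff_apply,
    bumpAt_apply hρ x, bumpAt_apply hρ (x - l), sub_zero]

lemma iteratedDeriv_localMonomial (hρ : 0 < ρ) (p j : ℕ) :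
    iteratedDeriv j (localMonomial l hρ p) l = if j = p then (p.factorial : ℂ) else 0 := by
  have heq : localMonomial 0 hρ p =ᶠ[𝓝 0] fun x : ℝ => x ^ p • (1 : ℂ) := by
    filter_upwards [cutoff_eventuallyEq_one (l := 0) hρ (by simpa using hρ)] with x hx
    simp [localMonomial_apply, hx]
  rw [localMonomial_eq_comp_sub, congrFun (iteratedDeriv_comp_sub_const j _ l) l, sub_self,
    heq.iteratedDeriv_eq, iteratedDeriv_smul_const (by fun_prop), iteratedDeriv_fun_pow_zero]
  split_ifs <;> simp

lemma HasWeightedBound.comp_sub {k n : ℕ} {f : ℝ → ℂ} {B : ℝ} (h : HasWeightedBound k n f B)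
    (l : ℝ) : HasWeightedBound k n (fun x => f (x - l)) ((1 + |l|) ^ k * B) := by
  intro j hj x
  have hx : 1 + |x| ≤ (1 + |l|) * (1 + |x - l|) := by
    have : |x| ≤ |x - l| + |l| := by simpa using abs_add_le (x - l) l
    nlinarith [abs_nonneg l, abs_nonneg (x - l)]
  rw [congrFun (iteratedDeriv_comp_sub_const j f l) x]
  calc (1 + |x|) ^ k * ‖iteratedDeriv j f (x - l)‖
      ≤ ((1 + |l|) * (1 + |x - l|)) ^ k * ‖iteratedDeriv j f (x - l)‖ := by gcongr
    _ = (1 + |l|) ^ k * ((1 + |x - l|) ^ k * ‖iteratedDeriv j f (x - l)‖) := by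
      rw [mul_pow]; ring
    _ ≤ (1 + |l|) ^ k * B := by gcongr; exact h j hj _

lemma exists_hasWeightedBound_localMonomial (hρ : 0 < ρ) (k n m : ℕ) :
    ∃ B, ∀ p ≤ m, ∀ l, HasWeightedBound k n (localMonomial l hρ p) ((1 + |l|) ^ k * B) := by
  choose B hB using fun p => exists_hasWeightedBound (localMonomial 0 hρ p) k n
  refine ⟨∑ p ∈ Finset.range (m + 1), B p, fun p hp l => ?_⟩
  have hBp : B p ≤ ∑ p ∈ Finset.range (m + 1), B p :=
    Finset.single_le_sum (fun i _ => (hB i).nonneg) (Finset.mem_range_succ_iff.2 hp)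
  rw [localMonomial_eq_comp_sub]
  exact fun j hj x => ((hB p).comp_sub l j hj x).trans (by gcongr)

end LocalMonomial

section JetSum

/-- The value at `f` of the differential operator `∑ p ≤ n, a p • ∂ ^ p` at the point `l`. -/
def jetSum (n : ℕ) (a : ℕ → ℂ) (l : ℝ) (f : ℝ → ℂ) : ℂ :=
  ∑ p ∈ Finset.range (n + 1), a p * iteratedDeriv p f l

variable {n : ℕ} {a : ℕ → ℂ} {l : ℝ}

lemma jetSum_congr {f g : ℝ → ℂ} (h : f =ᶠ[𝓝 l] g) : jetSum n a l f = jetSum n a l g :=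
  Finset.sum_congr rfl fun p _ => by rw [h.iteratedDeriv_eq]

lemma jetSum_eq_zero_of_notMem_tsupport {f : ℝ → ℂ} (hl : l ∉ tsupport f) :
    jetSum n a l f = 0 :=
  Finset.sum_eq_zero fun p _ => by rw [iteratedDeriv_eq_zero_of_notMem_tsupport hl, mul_zero]

lemma jetSum_sub (φ ψ : 𝓢(ℝ, ℂ)) :
    jetSum n a l (φ - ψ : 𝓢(ℝ, ℂ)) = jetSum n a l φ - jetSum n a l ψ := by
  simp only [jetSum, iteratedDeriv_schwartz_sub, mul_sub, Finset.sum_sub_distrib]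

lemma norm_jetSum_le {f : ℝ → ℂ} {A w : ℝ} (ha : ∀ p ≤ n, ‖a p‖ ≤ A)
    (hf : HasJetBound n f l 1 w) : ‖jetSum n a l f‖ ≤ (n + 1) * (A * w) := by
  have hA : 0 ≤ A := (norm_nonneg _).trans (ha 0 n.zero_le)
  calc ‖jetSum n a l f‖ ≤ ∑ _p ∈ Finset.range (n + 1), A * w := by
        refine norm_sum_le_of_le _ fun p hp => ?_
        have hp' : p ≤ n := Finset.mem_range_succ_iff.1 hp
        have hfp : ‖iteratedDeriv p f l‖ ≤ w := by simpa using hf p hp'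
        rw [norm_mul]
        gcongr
        exact ha p hp'
    _ = (n + 1) * (A * w) := by simp

end JetSum

section Structure

/-- An expansion of a tempered distribution as a sum of derivatives of Dirac masses of uniformly
bounded order at the points of its support, with coefficients of polynomial growth and without
zero terms. Signs are absorbed in the coefficients: the term at `l` is
`φ ↦ ∑ p ≤ order, coeff l p * φ^(p) l`. -/
structure DiracExpansion (α : TemperedDist) where
  /-- a common bound on the orders of the derivatives -/
  order : ℕ
  /-- exponent of the growth of the coefficients -/
  growth : ℕ
  /-- constant in the growth of the coefficients -/
  const : ℝ
  /-- coefficients -/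
  coeff : ℝ → ℕ → ℂ
  norm_coeff_le : ∀ l, ∀ p ≤ order, ‖coeff l p‖ ≤ const * (1 + |l|) ^ growth
  hasSum : ∀ φ : 𝓢(ℝ, ℂ), HasSum (fun l : TDsupport α => jetSum order (coeff l) l φ) (α φ)
  exists_coeff_ne_zero : ∀ l ∈ TDsupport α, ∃ p ≤ order, coeff l p ≠ 0

variable {α : TemperedDist} {k n : ℕ} {C δ l ρ : ℝ} (hρ : 0 < ρ)

/-- The Taylor polynomial of `φ` of degree `n` at `l`, cut off at scale `ρ`. -/
def localTaylor (l : ℝ) (n : ℕ) (φ : 𝓢(ℝ, ℂ)) : 𝓢(ℝ, ℂ) :=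
  ∑ p ∈ Finset.range (n + 1), (iteratedDeriv p φ l / p.factorial) • localMonomial l hρ p

lemma iteratedDeriv_localTaylor (φ : 𝓢(ℝ, ℂ)) {j : ℕ} (hj : j ≤ n) :
    iteratedDeriv j (localTaylor hρ l n φ) l = iteratedDeriv j φ l := by
  have hcoe : ⇑(localTaylor hρ l n φ) = fun x => ∑ p ∈ Finset.range (n + 1),
      iteratedDeriv p φ l / p.factorial * localMonomial l hρ p x := by
    ext x
    simp [localTaylor]
  have hterm (p : ℕ) : iteratedDeriv j
      (fun x => iteratedDeriv p φ l / p.factorial * localMonomial l hρ p x) l =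
        if j = p then iteratedDeriv j φ l else 0 := by
    rw [iteratedDeriv_const_mul_field, iteratedDeriv_localMonomial]
    split_ifs with h
    · rw [h, div_mul_cancel₀ _ (by exact_mod_cast p.factorial_ne_zero)]
    · rw [mul_zero]
  rw [hcoe, iteratedDeriv_fun_sum fun i _ =>
    (contDiff_const.mul ((localMonomial l hρ i).smooth _)).contDiffAt]
  simp only [hterm, Finset.sum_ite_eq, Finset.mem_range_succ_iff, hj, if_true]

lemma tsupport_localTaylor_subset (φ : 𝓢(ℝ, ℂ)) :
    tsupport (localTaylor hρ l n φ) ⊆ closedBall l (2 * ρ) := by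
  refine closure_minimal (fun x hx => ?_) isClosed_closedBall
  by_contra hxl
  refine hx ?_
  have hzero (p) : localMonomial l hρ p x = 0 :=
    image_eq_zero_of_notMem_tsupport fun h => hxl (tsupport_localMonomial_subset hρ p h)
  simp [localTaylor, hzero]

/-- The coefficient of the `p`-th derivative at `l` in the Dirac expansion of `α`, when `ρ` is
small enough for the ball of radius `2 * ρ` to isolate `l` in the support. -/
def jetCoeff (α : TemperedDist) (l : ℝ) (p : ℕ) : ℂ :=
  α (localMonomial l hρ p) / p.factorial

lemma HasOrderBound.exists_norm_jetCoeff_le (hα : HasOrderBound α k n C) :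
    ∃ A, ∀ l, ∀ p ≤ n, ‖jetCoeff hρ α l p‖ ≤ A * (1 + |l|) ^ k := by
  obtain ⟨B, hB⟩ := exists_hasWeightedBound_localMonomial hρ k n n
  refine ⟨C * B, fun l p hp => ?_⟩
  rw [jetCoeff, norm_div, Complex.norm_natCast]
  calc ‖α (localMonomial l hρ p)‖ / p.factorial
      ≤ ‖α (localMonomial l hρ p)‖ :=
        div_le_self (norm_nonneg _) (by exact_mod_cast p.factorial_pos)
    _ ≤ C * ((1 + |l|) ^ k * B) := hα _ _ (hB p hp l)
    _ = C * B * (1 + |l|) ^ k := by ring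

lemma HasOrderBound.apply_eq_jetSum (hα : HasOrderBound α k n C)
    (hl : closedBall l (2 * ρ) ∩ TDsupport α ⊆ {l}) {φ : 𝓢(ℝ, ℂ)}
    (hφ : tsupport φ ∩ TDsupport α ⊆ {l}) : α φ = jetSum n (jetCoeff hρ α l) l φ := by
  have hsub : α (φ - localTaylor hρ l n φ) = 0 := by
    refine hα.apply_eq_zero_of_jet_eq_zero (l := l) ?_ fun j hj => ?_
    · rintro x ⟨hx, hxα⟩
      rcases tsupport_sub _ _ hx with hx | hx
      · exact hφ ⟨hx, hxα⟩
      · exact hl ⟨tsupport_localTaylor_subset hρ φ hx, hxα⟩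
    · rw [iteratedDeriv_schwartz_sub, iteratedDeriv_localTaylor hρ φ hj, sub_self]
  rw [map_sub, sub_eq_zero] at hsub
  rw [hsub, localTaylor, map_sum]
  refine Finset.sum_congr rfl fun p _ => ?_
  rw [map_smul, smul_eq_mul, jetCoeff]
  ring

lemma IsSeparatedBy.closedBall_inter_subset {Λ : Set ℝ} (h : IsSeparatedBy δ Λ) (hl : l ∈ Λ)
    {r : ℝ} (hr : r < δ) : closedBall l r ∩ Λ ⊆ {l} := fun x hx => by
  by_contra hne
  have hxl : |x - l| ≤ r := hx.1
  linarith [h x hx.2 l hl hne]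

lemma apply_eq_sum_localize (h : IsSeparatedBy δ (TDsupport α)) (hρδ : 2 * ρ < δ) {ψ : 𝓢(ℝ, ℂ)}
    {s : Finset ℝ} (hs : (s : Set ℝ) = tsupport ψ ∩ TDsupport α) :
    α ψ = ∑ l ∈ s, α (localize l hρ ψ) := by
  have hmem (x : ℝ) : x ∈ s ↔ x ∈ tsupport ψ ∩ TDsupport α := by rw [← hs, Finset.mem_coe]
  rw [← map_sum]
  refine apply_eq_of_eventuallyEq fun x hx => ?_
  have hfar : ∀ l ∈ s, l ≠ x → localize l hρ ψ =ᶠ[𝓝 x] 0 := fun l hl hlx => by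
    refine notMem_tsupport_iff_eventuallyEq.1 fun hxl => hlx.symm ?_
    exact h.closedBall_inter_subset ((hmem l).1 hl).2 hρδ
      ⟨(tsupport_localize_subset hρ ψ hxl).1, hx⟩
  have hfar' : ∀ᶠ y in 𝓝 x, ∀ l ∈ s, l ≠ x → localize l hρ ψ y = 0 := by
    simp only [Filter.eventually_all_finset, Filter.eventually_imp_distrib_left]
    exact hfar
  by_cases hxs : x ∈ s
  · filter_upwards [hfar', localize_eventuallyEq_self hρ ψ (l := x) (by simpa using hρ)]
      with y hy hyx
    rw [_root_.sum_apply, Finset.sum_eq_single_of_mem x hxs hy, hyx]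
  · have hxψ : x ∉ tsupport ψ := fun h => hxs ((hmem x).2 ⟨h, hx⟩)
    filter_upwards [hfar', notMem_tsupport_iff_eventuallyEq.1 hxψ] with y hy hyx
    rw [_root_.sum_apply, hyx, Pi.zero_apply]
    exact (Finset.sum_eq_zero fun l hl => hy l hl fun hlx => hxs (hlx ▸ hl)).symm

lemma HasOrderBound.hasSum_of_hasCompactSupport (hα : HasOrderBound α k n C)
    (h : IsSeparatedBy δ (TDsupport α)) (hρδ : 2 * ρ < δ) {ψ : 𝓢(ℝ, ℂ)}
    (hψ : HasCompactSupport ψ) :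
    HasSum (fun l : TDsupport α => jetSum n (jetCoeff hρ α l) l ψ) (α ψ) := by
  have hδ : 0 < δ := by linarith
  have hfin : (tsupport ψ ∩ TDsupport α).Finite := by
    simpa only [inter_comm] using h.finite_inter_of_isCompact hδ hψ
  have hloc : ∀ l ∈ hfin.toFinset, α (localize l hρ ψ) = jetSum n (jetCoeff hρ α l) l ψ := by
    intro l hl
    have hball := h.closedBall_inter_subset (hfin.mem_toFinset.1 hl).2 hρδ
    rw [hα.apply_eq_jetSum hρ hball fun x hx =>
      hball ⟨(tsupport_localize_subset hρ ψ hx.1).1, hx.2⟩]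
    exact jetSum_congr (localize_eventuallyEq_self hρ ψ (by simpa using hρ))
  rw [apply_eq_sum_localize hρ h hρδ hfin.coe_toFinset, Finset.sum_congr rfl hloc]
  classical
  rw [← Finset.sum_subtype_of_mem (fun l => jetSum n (jetCoeff hρ α l) l ψ)
    fun l hl => (hfin.mem_toFinset.1 hl).2]
  refine hasSum_sum_of_ne_finset_zero fun l hl => jetSum_eq_zero_of_notMem_tsupport fun hlψ => hl ?_
  exact Finset.mem_subtype.2 (hfin.mem_toFinset.2 ⟨hlψ, l.2⟩)

lemma norm_jetSum_le_mul_inv_sq {a : ℕ → ℂ} {f : ℝ → ℂ} {A D : ℝ}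
    (ha : ∀ p ≤ n, ‖a p‖ ≤ A * (1 + |l|) ^ k) (hf : HasWeightedBound (k + 2) n f D) :
    ‖jetSum n a l f‖ ≤ (n + 1) * A * D * ((1 + |l|) ^ 2)⁻¹ :=
  (norm_jetSum_le ha (hf.hasJetBound l)).trans_eq (by rw [pow_add]; field_simp)

lemma HasOrderBound.hasSum_jetSum (hα : HasOrderBound α k n C)
    (h : IsSeparatedBy δ (TDsupport α)) (hρδ : 2 * ρ < δ) (φ : 𝓢(ℝ, ℂ)) :
    HasSum (fun l : TDsupport α => jetSum n (jetCoeff hρ α l) l φ) (α φ) := by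
  obtain ⟨A, hA⟩ := hα.exists_norm_jetCoeff_le hρ
  have hsummable := h.summable_inv_one_add_abs_sq (by linarith)
  have hsum (φ : 𝓢(ℝ, ℂ)) : Summable fun l : TDsupport α => jetSum n (jetCoeff hρ α l) l φ := by
    obtain ⟨D, hD⟩ := exists_hasWeightedBound φ (k + 2) n
    exact .of_norm_bounded (hsummable.mul_left _) fun l => norm_jetSum_le_mul_inv_sq (hA l) hD
  suffices α φ - ∑' l : TDsupport α, jetSum n (jetCoeff hρ α l) l φ = 0 by
    rw [sub_eq_zero.1 this]
    exact (hsum φ).hasSum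
  set S := ∑' l : TDsupport α, ((1 + |(l : ℝ)|) ^ 2)⁻¹
  refine eq_zero_of_eventually_norm_le_mul (C := C + (n + 1) * A * S) ?_
  filter_upwards [self_mem_nhdsWithin] with ε hε
  obtain ⟨ψ, hψ, -, happrox⟩ := exists_hasCompactSupport_approx φ (k + 2) n hε
  have hdiff : α φ - ∑' l : TDsupport α, jetSum n (jetCoeff hρ α l) l φ =
      α (φ - ψ) - ∑' l : TDsupport α, jetSum n (jetCoeff hρ α l) l (φ - ψ : 𝓢(ℝ, ℂ)) := by
    simp_rw [jetSum_sub]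
    rw [(hsum φ).tsum_sub (hsum ψ), map_sub,
      (hα.hasSum_of_hasCompactSupport hρ h hρδ hψ).tsum_eq]
    ring
  have htail : ‖∑' l : TDsupport α, jetSum n (jetCoeff hρ α l) l (φ - ψ : 𝓢(ℝ, ℂ))‖ ≤
      (n + 1) * A * ε * S :=
    tsum_of_norm_bounded (hsummable.hasSum.mul_left _) fun l =>
      norm_jetSum_le_mul_inv_sq (hA l) happrox
  rw [hdiff]
  calc _ ≤ C * ε + (n + 1) * A * ε * S :=
        norm_sub_le_of_le (hα _ _ (happrox.mono (by omega))) htail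
    _ = (C + (n + 1) * A * S) * ε := by ring

lemma HasOrderBound.exists_jetCoeff_ne_zero (hα : HasOrderBound α k n C)
    (h : IsSeparatedBy δ (TDsupport α)) (hρδ : 2 * ρ < δ) (hl : l ∈ TDsupport α) :
    ∃ p ≤ n, jetCoeff hρ α l p ≠ 0 := by
  by_contra! hzero
  obtain ⟨φ, hφ, hne⟩ := hl (ball l (2 * ρ)) isOpen_ball (mem_ball_self (by linarith))
  have hball := h.closedBall_inter_subset hl hρδ
  refine hne ?_
  rw [hα.apply_eq_jetSum hρ hball fun x hx => hball ⟨ball_subset_closedBall (hφ hx.1), hx.2⟩]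
  exact Finset.sum_eq_zero fun p hp => by
    rw [hzero p (Finset.mem_range_succ_iff.1 hp), zero_mul]

theorem nonempty_diracExpansion (hδ : 0 < δ) (h : IsSeparatedBy δ (TDsupport α)) :
    Nonempty (DiracExpansion α) := by
  obtain ⟨k, n, C, hα⟩ := exists_hasOrderBound α
  have hρ : 0 < δ / 4 := by linarith
  have hρδ : 2 * (δ / 4) < δ := by linarith
  obtain ⟨A, hA⟩ := hα.exists_norm_jetCoeff_le hρ
  exact ⟨{
    order := n
    growth := k
    const := A
    coeff := jetCoeff hρ α
    norm_coeff_le := hA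
    hasSum := hα.hasSum_jetSum hρ h hρδ
    exists_coeff_ne_zero := fun _ hl => hα.exists_jetCoeff_ne_zero hρ h hρδ hl }⟩

end Structure

section Character

variable {n : ℕ} {f : ℝ → ℂ} {l w : ℝ}

/-- The additive character `x ↦ exp (-2πiξx)` of `ℝ`, i.e. the kernel of the Fourier transform. -/
def character (ξ x : ℝ) : ℂ :=
  𝐞 (-(ξ * x))

lemma norm_character (ξ x : ℝ) : ‖character ξ x‖ = 1 :=
  Circle.norm_coe _

lemma character_comm (ξ x : ℝ) : character ξ x = character x ξ := by
  rw [character, mul_comm, character]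

lemma character_zero_right (ξ : ℝ) : character ξ 0 = 1 := by
  simp [character]

lemma character_add_left (ξ η x : ℝ) : character (ξ + η) x = character ξ x * character η x := by
  rw [character, add_mul, neg_add, AddChar.map_add_eq_mul, Circle.coe_mul, character, character]

lemma character_mul_comm (s ξ x : ℝ) : character (s * ξ) x = character ξ (s * x) := by
  rw [character, character, mul_left_comm, mul_assoc]

lemma conj_character (ξ x : ℝ) : (starRingEnd ℂ) (character ξ x) = character (-ξ) x := by
  rw [character, character, ← Circle.coe_inv_eq_conj, ← AddChar.map_neg_eq_inv, neg_mul]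

lemma hasDerivAt_character (ξ x : ℝ) :
    HasDerivAt (character ξ) (-2 * Real.pi * I * ξ * character ξ x) x := by
  have h := (Real.hasDerivAt_fourierChar (-(ξ * x))).scomp x ((hasDerivAt_id x).const_mul ξ).neg
  refine h.congr_deriv ?_
  rw [real_smul, character]
  push_cast
  ring

lemma iteratedDeriv_character (ξ : ℝ) (j : ℕ) :
    iteratedDeriv j (character ξ) = fun x => (-2 * Real.pi * I * ξ) ^ j * character ξ x := by
  induction j with
  | zero => simp
  | succ j ih =>
    ext x
    rw [iteratedDeriv_succ, ih, ((hasDerivAt_character ξ x).const_mul _).deriv, pow_succ]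
    ring

lemma contDiff_character (ξ : ℝ) : ContDiff ℝ ∞ (character ξ) :=
  contDiff_of_differentiable_iteratedDeriv fun j _ => by
    rw [iteratedDeriv_character]
    exact fun x => ((hasDerivAt_character ξ x).const_mul _).differentiableAt

lemma hasJetBound_character (n : ℕ) (ξ x : ℝ) :
    HasJetBound n (character ξ) x (2 * Real.pi * |ξ|) 1 := fun j _ => by
  rw [iteratedDeriv_character]
  simp [norm_character, abs_of_pos Real.pi_pos]

lemma HasJetBound.character_mul (hf : ContDiff ℝ ∞ f) (h : HasJetBound n f l 1 w) (ξ : ℝ) :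
    HasJetBound n (character ξ * f) l 1 ((1 + 2 * Real.pi * |ξ|) ^ n * w) := fun j hj => by
  have hw : 0 ≤ w := by simpa using (norm_nonneg _).trans (h 0 n.zero_le)
  have h₁ : 1 ≤ 1 + 2 * Real.pi * |ξ| := by linarith [show 0 ≤ 2 * Real.pi * |ξ| by positivity]
  refine ((hasJetBound_character n ξ l).mul (contDiff_character ξ) hf (by positivity) zero_le_one h
    j hj).trans ?_
  rw [one_pow, one_mul, one_mul, add_comm]
  gcongr

lemma iteratedDeriv_character_mul (hf : ContDiff ℝ ∞ f) (ξ : ℝ) (p : ℕ) :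
    iteratedDeriv p (character ξ * f) l = ∑ i ∈ Finset.range (p + 1),
      p.choose i * ((-2 * Real.pi * I * ξ) ^ i * character ξ l) * iteratedDeriv (p - i) f l := by
  have hp : ((p : ℕ) : WithTop ℕ∞) ≤ ∞ := by exact_mod_cast le_top
  rw [iteratedDeriv_mul ((contDiff_character ξ).of_le hp).contDiffAt (hf.of_le hp).contDiffAt]
  simp only [iteratedDeriv_character]

lemma exists_jetSum_character_mul_eq (n : ℕ) (a : ℕ → ℂ) (l : ℝ) (hf : ContDiff ℝ ∞ f) :
    ∃ P : Polynomial ℂ, ∀ ξ : ℝ,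
      jetSum n a l (character ξ * f) = character ξ l * P.eval (ξ : ℂ) := by
  refine ⟨∑ p ∈ Finset.range (n + 1), ∑ i ∈ Finset.range (p + 1),
    Polynomial.C (a p * p.choose i * (-2 * Real.pi * I) ^ i * iteratedDeriv (p - i) f l) *
      Polynomial.X ^ i, fun ξ => ?_⟩
  simp only [jetSum, iteratedDeriv_character_mul hf, Polynomial.eval_finsetSum, Finset.mul_sum,
    Polynomial.eval_mul, Polynomial.eval_C, Polynomial.eval_pow, Polynomial.eval_X]
  refine Finset.sum_congr rfl fun p _ => Finset.sum_congr rfl fun i _ => ?_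
  rw [mul_pow _ (ξ : ℂ)]
  ring

lemma iteratedDeriv_character_mul_of_jet_eq_zero {p : ℕ} (hf : ContDiff ℝ ∞ f)
    (h : ∀ j < p, iteratedDeriv j f l = 0) (ξ : ℝ) {j : ℕ} (hj : j ≤ p) :
    iteratedDeriv j (character ξ * f) l = character ξ l * iteratedDeriv j f l := by
  rw [iteratedDeriv_character_mul hf, Finset.sum_eq_single_of_mem 0 (by simp)]
  · simp
  · intro i hi hi₀
    rw [h (j - i) (by grind), mul_zero]

lemma jetSum_character_mul_of_jet_eq_zero {a : ℕ → ℂ} {p : ℕ} (hp : p ≤ n)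
    (hf : ContDiff ℝ ∞ f) (ha : ∀ j ≤ n, p < j → a j = 0)
    (h : ∀ j < p, iteratedDeriv j f l = 0) (ξ : ℝ) :
    jetSum n a l (character ξ * f) = a p * iteratedDeriv p f l * character ξ l := by
  rw [jetSum, Finset.sum_eq_single_of_mem p (by simpa [Nat.lt_succ_iff] using hp),
    iteratedDeriv_character_mul_of_jet_eq_zero hf h ξ le_rfl]
  · ring
  · intro j hj hjp
    rcases hjp.lt_or_gt with hlt | hgt
    · rw [iteratedDeriv_character_mul_of_jet_eq_zero hf h ξ hlt.le, h j hlt, mul_zero, mul_zero]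
    · rw [ha j (Finset.mem_range_succ_iff.1 hj) hgt, zero_mul]

end Character

section Fourier

variable {s : ℝ}

lemma fourierTD_apply (α : TemperedDist) (ψ : 𝓢(ℝ, ℂ)) : fourierTD α ψ = α (𝓕 ψ : 𝓢(ℝ, ℂ)) := rfl

lemma fourier_eq_integral_character (ψ : 𝓢(ℝ, ℂ)) (x : ℝ) :
    (𝓕 ψ : 𝓢(ℝ, ℂ)) x = ∫ v, character v x * ψ v := by
  rw [fourier_coe, Real.fourier_real_eq]
  rfl

lemma fourier_fourier_apply (ψ : 𝓢(ℝ, ℂ)) (x : ℝ) : (𝓕 (𝓕 ψ) : 𝓢(ℝ, ℂ)) x = ψ (-x) := by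
  have h : (𝓕⁻ (𝓕 ψ) : 𝓢(ℝ, ℂ)) (-x) = ψ (-x) := by rw [FourierTransform.fourierInv_fourier_eq]
  rwa [fourierInv_coe, Real.fourierInv_eq_fourier_neg, neg_neg, ← fourier_coe] at h

lemma fourier_compSubConstCLM_apply (ψ : 𝓢(ℝ, ℂ)) (ξ x : ℝ) :
    (𝓕 (compSubConstCLM ℂ ξ ψ) : 𝓢(ℝ, ℂ)) x = character ξ x * (𝓕 ψ : 𝓢(ℝ, ℂ)) x := by
  rw [fourier_eq_integral_character, fourier_eq_integral_character, ← integral_const_mul,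
    ← integral_add_right_eq_self _ ξ]
  refine integral_congr_ae (.of_forall fun v => ?_)
  simp only [compSubConstCLM_apply, add_sub_cancel_right, character_add_left]
  ring

lemma fourier_derivCLM_apply (ψ : 𝓢(ℝ, ℂ)) (x : ℝ) :
    (𝓕 (derivCLM ℂ ℂ ψ) : 𝓢(ℝ, ℂ)) x = 2 * Real.pi * I * x * (𝓕 ψ : 𝓢(ℝ, ℂ)) x := by
  have h := Real.fourier_deriv ψ.integrable ψ.differentiable (derivCLM ℂ ℂ ψ).integrable
  rw [fourier_coe, show ⇑(derivCLM ℂ ℂ ψ) = deriv ψ from rfl, h, fourier_coe]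
  rfl

/-- Precomposition of a Schwartz function with the dilation by `s ≠ 0`. -/
def dilate (hs : s ≠ 0) : 𝓢(ℝ, ℂ) →L[ℂ] 𝓢(ℝ, ℂ) :=
  compCLMOfContinuousLinearEquiv ℂ (ContinuousLinearEquiv.unitsEquivAut ℝ (Units.mk0 s hs))

lemma dilate_apply (hs : s ≠ 0) (ψ : 𝓢(ℝ, ℂ)) (x : ℝ) : dilate hs ψ x = ψ (x * s) := rfl

lemma fourier_dilate_inv_apply (hs : 0 < s) (ψ : 𝓢(ℝ, ℂ)) (x : ℝ) :
    (𝓕 (dilate (inv_ne_zero hs.ne') ψ) : 𝓢(ℝ, ℂ)) x = s * (𝓕 ψ : 𝓢(ℝ, ℂ)) (s * x) := by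
  have h := MeasureTheory.Measure.integral_comp_mul_right
    (fun v => character v (s * x) * ψ v) s⁻¹
  rw [inv_inv, abs_of_pos hs, real_smul] at h
  rw [fourier_eq_integral_character, fourier_eq_integral_character, ← h]
  refine integral_congr_ae (.of_forall fun v => ?_)
  simp only [dilate_apply]
  rw [← character_mul_comm, mul_comm v, mul_inv_cancel_left₀ hs.ne']

end Fourier

section Spectrum

variable {V W : Set ℝ} {f g : ℝ → ℂ} {η s : ℝ}

/-- `HasSpectrumIn V f`: the function `f` is the Fourier transform of a Schwartz function supported
in `V`. -/
def HasSpectrumIn (V : Set ℝ) (f : ℝ → ℂ) : Prop :=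
  ∃ ψ : 𝓢(ℝ, ℂ), ⇑(𝓕 ψ : 𝓢(ℝ, ℂ)) = f ∧ tsupport ψ ⊆ V

lemma HasSpectrumIn.exists_coe_eq (h : HasSpectrumIn V f) : ∃ φ : 𝓢(ℝ, ℂ), ⇑φ = f :=
  let ⟨ψ, hψ, _⟩ := h
  ⟨𝓕 ψ, hψ⟩

lemma HasSpectrumIn.apply_eq_zero {α : TemperedDist} {φ : 𝓢(ℝ, ℂ)} (h : HasSpectrumIn V φ)
    (hV : Disjoint V (TDsupport (fourierTD α))) : α φ = 0 := by
  obtain ⟨ψ, hφ, hψ⟩ := h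
  rw [← DFunLike.coe_injective hφ, ← fourierTD_apply]
  exact apply_eq_zero_of_disjoint (hV.mono_left hψ)

lemma HasSpectrumIn.fourierTD_apply_eq_zero {α : TemperedDist} {φ : 𝓢(ℝ, ℂ)}
    (h : HasSpectrumIn V φ) (hV : Disjoint (-V) (TDsupport α)) : fourierTD α φ = 0 := by
  obtain ⟨ψ, hφ, hψ⟩ := h
  have hsupp : tsupport (𝓕 (𝓕 ψ) : 𝓢(ℝ, ℂ)) ⊆ -V := by
    have hneg : ⇑(𝓕 (𝓕 ψ) : 𝓢(ℝ, ℂ)) = ψ ∘ Homeomorph.neg ℝ := funext (fourier_fourier_apply ψ)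
    rw [hneg, tsupport_comp_eq_preimage]
    exact preimage_mono hψ
  rw [← DFunLike.coe_injective hφ, fourierTD_apply]
  exact apply_eq_zero_of_disjoint (hV.mono_left hsupp)

lemma HasSpectrumIn.character_mul (h : HasSpectrumIn V f) (ξ : ℝ) :
    HasSpectrumIn ((· - ξ) ⁻¹' V) (character ξ * f) := by
  obtain ⟨ψ, rfl, hψ⟩ := h
  refine ⟨compSubConstCLM ℂ ξ ψ, funext (fourier_compSubConstCLM_apply ψ ξ), ?_⟩
  exact (tsupport_comp_eq_preimage ψ (Homeomorph.subRight ξ)).subset.trans (preimage_mono hψ)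

lemma HasSpectrumIn.comp_sub (h : HasSpectrumIn V f) (l : ℝ) :
    HasSpectrumIn V fun x => f (x - l) := by
  obtain ⟨ψ, rfl, hψ⟩ := h
  set χ : 𝓢(ℝ, ℂ) := 𝓕⁻ (compSubConstCLM ℂ l (𝓕 ψ)) with hχ
  have hχ_eq : ⇑χ = (fun x => character l (-x)) * ψ := by
    ext x
    rw [hχ, fourierInv_coe, Real.fourierInv_eq_fourier_neg, ← fourier_coe,
      fourier_compSubConstCLM_apply, fourier_fourier_apply, neg_neg, Pi.mul_apply]
  refine ⟨χ, ?_, ?_⟩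
  · rw [hχ, FourierTransform.fourier_fourierInv_eq]
    exact funext fun x => compSubConstCLM_apply _ _ _
  · rw [hχ_eq]
    exact tsupport_mul_subset_right.trans hψ

lemma HasSpectrumIn.affine_mul (h : HasSpectrumIn V f) (a b : ℂ) :
    HasSpectrumIn V fun x => (a + b * x) * f x := by
  obtain ⟨ψ, rfl, hψ⟩ := h
  refine ⟨a • ψ + (b / (2 * Real.pi * I)) • derivCLM ℂ ℂ ψ, ?_, ?_⟩
  · ext x
    simp only [FourierTransform.fourier_add, FourierTransform.fourier_smul, _root_.add_apply,
      _root_.smul_apply, fourier_derivCLM_apply, smul_eq_mul]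
    field_simp [I_ne_zero, ofReal_ne_zero.2 Real.pi_ne_zero]
  · refine (tsupport_add _ _).trans (union_subset ?_ ?_)
    · exact (closure_mono (Function.support_const_smul_subset a ψ)).trans hψ
    · refine (closure_mono (Function.support_const_smul_subset _ _)).trans ?_
      exact (tsupport_deriv_subset (f := ψ)).trans hψ

lemma HasSpectrumIn.add (hf : HasSpectrumIn V f) (hg : HasSpectrumIn V g) :
    HasSpectrumIn V (f + g) := by
  obtain ⟨ψ, rfl, hψ⟩ := hf
  obtain ⟨χ, rfl, hχ⟩ := hg
  refine ⟨ψ + χ, ?_, (tsupport_add _ _).trans (union_subset hψ hχ)⟩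
  rw [FourierTransform.fourier_add]
  rfl

lemma HasSpectrumIn.polynomial_mul (h : HasSpectrumIn V f) (P : Polynomial ℂ) :
    HasSpectrumIn V fun x => P.eval (x : ℂ) * f x := by
  induction P using Polynomial.induction_on with
  | C a => simpa using h.affine_mul a 0
  | add P Q hP hQ =>
    simp only [Polynomial.eval_add, add_mul]
    exact hP.add hQ
  | monomial n a ih =>
    convert ih.affine_mul 0 1 using 2 with x
    simp [pow_succ]
    ring

lemma HasSpectrumIn.mul (hf : HasSpectrumIn V f) (hg : HasSpectrumIn W g)
    (hVW : IsClosed (V + W)) : HasSpectrumIn (V + W) (f * g) := by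
  obtain ⟨ψ, rfl, hψ⟩ := hf
  obtain ⟨χ, rfl, hχ⟩ := hg
  refine ⟨convolution (ContinuousLinearMap.mul ℂ ℂ) ψ χ, ?_, closure_minimal (fun x hx => ?_) hVW⟩
  · ext x
    rw [fourier_convolution]
    simp
  · rw [Function.mem_support, convolution_apply] at hx
    exact add_subset_add ((subset_tsupport _).trans hψ) ((subset_tsupport _).trans hχ)
      (support_convolution_subset _ hx)

lemma HasSpectrumIn.pow (hη : 0 ≤ η) (h : HasSpectrumIn (closedBall 0 η) f) {m : ℕ} (hm : 1 ≤ m) :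
    HasSpectrumIn (closedBall 0 (m * η)) (f ^ m) := by
  induction m, hm using Nat.le_induction with
  | base => simpa using h
  | succ m hm ih =>
    have hball : closedBall (0 : ℝ) (m * η) + closedBall 0 η = closedBall 0 ((m + 1 : ℕ) * η) := by
      rw [closedBall_add_closedBall (by positivity) hη, add_zero]
      push_cast
      ring_nf
    rw [pow_succ, ← hball]
    exact ih.mul h (hball ▸ isClosed_closedBall)

lemma HasSpectrumIn.comp_const_mul (hs : 0 < s) (h : HasSpectrumIn (closedBall 0 η) f) :
    HasSpectrumIn (closedBall 0 (s * η)) fun x => f (s * x) := by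
  obtain ⟨ψ, rfl, hψ⟩ := h
  have hs' := inv_ne_zero hs.ne'
  refine ⟨(s⁻¹ : ℂ) • dilate hs' ψ, ?_, ?_⟩
  · ext x
    rw [FourierTransform.fourier_smul, _root_.smul_apply, fourier_dilate_inv_apply hs,
      smul_eq_mul, inv_mul_cancel_left₀ (ofReal_ne_zero.2 hs.ne')]
  · refine (closure_mono (Function.support_const_smul_subset _ _)).trans ?_
    refine (tsupport_comp_eq_preimage ψ (Homeomorph.mulRight₀ s⁻¹ hs')).subset.trans fun x hx => ?_
    have := hψ hx
    rw [mem_closedBall_zero_iff] at this ⊢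
    simpa [abs_of_pos hs, mul_inv_le_iff₀ hs, mul_comm] using this

lemma exists_hasSpectrumIn_closedBall_one : ∃ g : 𝓢(ℝ, ℂ), g 0 = 1 ∧
    HasSpectrumIn (closedBall 0 1) g := by
  have hhalf : (0 : ℝ) < 1 / 2 := by norm_num
  set χ := cutoff 0 hhalf
  have hint : (∫ v, χ v) ≠ 0 := by
    have : (∫ v, χ v) = ((∫ v, bumpAt 0 hhalf v : ℝ) : ℂ) := integral_ofReal
    rw [this]
    exact ofReal_ne_zero.2 (bumpAt 0 hhalf).integral_pos.ne'
  refine ⟨𝓕 ((∫ v, χ v)⁻¹ • χ), ?_, _, rfl, ?_⟩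
  · rw [FourierTransform.fourier_smul, _root_.smul_apply,
      fourier_eq_integral_character]
    simp [character_zero_right, hint]
  · refine (closure_mono (Function.support_const_smul_subset _ χ)).trans ?_
    rw [show (1 : ℝ) = 2 * (1 / 2) by norm_num]
    exact tsupport_cutoff_subset hhalf

end Spectrum

section JetBounds

variable {n : ℕ} {f : ℝ → ℂ} {x B w : ℝ}

lemma hasJetBound_one (n : ℕ) (x : ℝ) : HasJetBound n 1 x 0 1 := fun j _ => by
  have h : iteratedDeriv j (1 : ℝ → ℂ) x = if j = 0 then 1 else 0 := iteratedDeriv_const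
  rw [h]
  split_ifs with hj <;> simp [hj]

lemma HasJetBound.nonneg (h : HasJetBound n f x B w) : 0 ≤ w := by
  simpa using (norm_nonneg _).trans (h 0 n.zero_le)

lemma HasJetBound.mono {w' : ℝ} (hB : 0 ≤ B) (hw : w ≤ w') (h : HasJetBound n f x B w) :
    HasJetBound n f x B w' :=
  fun j hj => (h j hj).trans (by gcongr)

lemma HasJetBound.of_le {B' : ℝ} (hB : 0 ≤ B) (hBB' : B ≤ B') (hB' : 1 ≤ B')
    (h : HasJetBound n f x B w) : HasJetBound n f x 1 (B' ^ n * w) := fun j hj => by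
  have hw := h.nonneg
  rw [one_pow, one_mul]
  refine (h j hj).trans ?_
  gcongr
  exact (pow_le_pow_left₀ hB hBB' j).trans (pow_le_pow_right₀ hB' hj)

lemma HasJetBound.pow (hf : ContDiff ℝ ∞ f) (hB : 0 ≤ B) (h : HasJetBound n f x B w) (m : ℕ) :
    HasJetBound n (f ^ m) x (m * B) (w ^ m) := by
  induction m with
  | zero => simpa using hasJetBound_one n x
  | succ m ih =>
    have hm : ((m + 1 : ℕ) : ℝ) * B = m * B + B := by push_cast; ring
    rw [pow_succ, pow_succ, hm]
    exact ih.mul (hf.pow m) hf (by positivity) (pow_nonneg h.nonneg m) h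

lemma contDiff_finset_prod {Z : Finset ℝ} {F : ℝ → ℝ → ℂ} (hF : ∀ z ∈ Z, ContDiff ℝ ∞ (F z)) :
    ContDiff ℝ ∞ (∏ z ∈ Z, F z) := by
  rw [Finset.prod_fn]
  exact contDiff_prod hF

lemma HasJetBound.prod {Z : Finset ℝ} {F : ℝ → ℝ → ℂ} {W : ℝ → ℝ} (hB : 0 ≤ B)
    (hF : ∀ z ∈ Z, ContDiff ℝ ∞ (F z)) (h : ∀ z ∈ Z, HasJetBound n (F z) x B (W z)) :
    HasJetBound n (∏ z ∈ Z, F z) x (Z.card * B) (∏ z ∈ Z, W z) := by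
  induction Z using Finset.induction_on with
  | empty => simpa using hasJetBound_one n x
  | insert a s ha ih =>
    rw [Finset.forall_mem_insert] at hF h
    have hcard : ((insert a s).card : ℝ) * B = B + s.card * B := by
      rw [Finset.card_insert_of_notMem ha]; push_cast; ring
    rw [Finset.prod_insert ha, Finset.prod_insert ha, hcard]
    exact h.1.mul hF.1 (contDiff_finset_prod hF.2) hB h.1.nonneg (ih hF.2 h.2)

lemma hasJetBound_affine {a b : ℂ} (h₀ : ‖a + b * x‖ ≤ w) (h₁ : ‖b‖ ≤ w) :
    HasJetBound n (fun y : ℝ => a + b * y) x 1 w := by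
  have hderiv : deriv (fun y : ℝ => a + b * (y : ℂ)) = fun _ => b := by
    ext y
    simpa using (((hasDerivAt_id y).ofReal_comp.const_mul b).const_add a).deriv
  intro j _
  rw [one_pow, one_mul]
  match j with
  | 0 => simpa
  | 1 => rwa [iteratedDeriv_one, hderiv]
  | j + 2 =>
    rw [iteratedDeriv_succ', iteratedDeriv_succ', hderiv]
    simpa using (norm_nonneg b).trans h₁

lemma iteratedDeriv_sub_pow (l : ℝ) (p j : ℕ) :
    iteratedDeriv j ((fun x : ℝ => (x : ℂ) - l) ^ p) l =
      if j = p then (p.factorial : ℂ) else 0 := by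
  have hpow : (fun x : ℝ => (x : ℂ) - l) ^ p = fun x => (x - l) ^ p • (1 : ℂ) := by ext x; simp
  rw [hpow, congrFun (iteratedDeriv_comp_sub_const j (fun x : ℝ => x ^ p • (1 : ℂ)) l) l, sub_self,
    iteratedDeriv_smul_const (by fun_prop), iteratedDeriv_fun_pow_zero]
  split_ifs with h <;> simp

lemma contDiff_sub_pow (l : ℝ) (p : ℕ) : ContDiff ℝ ∞ ((fun x : ℝ => (x : ℂ) - l) ^ p) :=
  (ofRealCLM.contDiff.sub contDiff_const).pow p

lemma iteratedDeriv_sub_pow_mul {l : ℝ} {p j : ℕ} (hj : j ≤ p) (hf : ContDiff ℝ ∞ f) :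
    iteratedDeriv j ((fun x : ℝ => (x : ℂ) - l) ^ p * f) l =
      if j = p then p.factorial * f l else 0 := by
  have hj' : ((j : ℕ) : WithTop ℕ∞) ≤ ∞ := by exact_mod_cast le_top
  rw [iteratedDeriv_mul ((contDiff_sub_pow l p).of_le hj').contDiffAt (hf.of_le hj').contDiffAt,
    Finset.sum_eq_single_of_mem j (by simp)]
  · rw [iteratedDeriv_sub_pow]
    split_ifs with h <;> simp
  · intro i hi hij
    rw [iteratedDeriv_sub_pow, if_neg (by grind), mul_zero, zero_mul]

lemma HasWeightedBound.hasJetBound_comp_mul_sub {C s l : ℝ} {g : ℝ → ℂ} (hg : ContDiff ℝ ∞ g)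
    (h : HasWeightedBound 1 n g C) (hs : 0 < s) (hs₁ : s ≤ 1) (hx : x ≠ l) :
    HasJetBound n (fun y => g (s * (y - l))) x 1 (C / (s * |x - l|)) := fun j hj => by
  have hj' : ((j : ℕ) : WithTop ℕ∞) ≤ ∞ := by exact_mod_cast le_top
  have : 0 < |x - l| := abs_pos.2 (sub_ne_zero.2 hx)
  have hbound := h j hj (s * (x - l))
  rw [pow_one, abs_mul, abs_of_pos hs] at hbound
  rw [congrFun (iteratedDeriv_comp_sub_const j (fun y => g (s * y)) l) x,
    congrFun (iteratedDeriv_comp_const_smul (hg.of_le hj') s) (x - l), norm_smul, one_pow, one_mul,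
    le_div_iff₀ (by positivity), norm_pow, Real.norm_of_nonneg hs.le]
  have hsj : s ^ j ≤ 1 := pow_le_one₀ hs.le hs₁
  calc s ^ j * ‖iteratedDeriv j g (s * (x - l))‖ * (s * |x - l|)
      ≤ 1 * ‖iteratedDeriv j g (s * (x - l))‖ * (1 + s * |x - l|) := by gcongr; linarith
    _ ≤ C := by linarith

end JetBounds

section VanishingKernel

/-- A band-limited function vanishing to order `p` at `l` and to order `q` on `Z`, and decaying
away from `l`, when `g` is a band-limited Schwartz function with `g 0 = 1`. -/
def vanishingKernel (g : ℝ → ℂ) (s l : ℝ) (Z : Finset ℝ) (p q m : ℕ) : ℝ → ℂ :=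
  (fun x : ℝ => (x : ℂ) - l) ^ p *
    ((∏ z ∈ Z, (fun x : ℝ => 1 - ((x : ℂ) - l) / (z - l)) ^ q) * (fun x => g (s * (x - l))) ^ m)

variable {g : ℝ → ℂ} {s l x C : ℝ} {Z : Finset ℝ} {n p q m : ℕ}

lemma contDiff_one_sub_div (l z : ℝ) : ContDiff ℝ ∞ fun x : ℝ => 1 - ((x : ℂ) - l) / (z - l) :=
  contDiff_const.sub ((ofRealCLM.contDiff.sub contDiff_const).div_const _)

lemma contDiff_prod_one_sub_div_pow (l : ℝ) (Z : Finset ℝ) (q : ℕ) :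
    ContDiff ℝ ∞ (∏ z ∈ Z, (fun x : ℝ => 1 - ((x : ℂ) - l) / (z - l)) ^ q) :=
  contDiff_finset_prod fun z _ => (contDiff_one_sub_div l z).pow q

lemma contDiff_comp_mul_sub (hg : ContDiff ℝ ∞ g) (s l : ℝ) :
    ContDiff ℝ ∞ fun x => g (s * (x - l)) :=
  hg.comp (contDiff_const.mul (contDiff_id.sub contDiff_const))

lemma hasSpectrumIn_vanishingKernel (hg : HasSpectrumIn (closedBall 0 1) g) (hs : 0 < s)
    (hm : 1 ≤ m) : HasSpectrumIn (closedBall 0 (m * s)) (vanishingKernel g s l Z p q m) := by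
  have hpow := (((hg.comp_const_mul hs).comp_sub l).pow (by positivity) hm)
  convert hpow.polynomial_mul ((Polynomial.X - Polynomial.C (l : ℂ)) ^ p *
    ∏ z ∈ Z, (1 - Polynomial.C ((z - l : ℂ)⁻¹) * (Polynomial.X - Polynomial.C (l : ℂ))) ^ q) using 1
  · simp
  · ext x
    simp [vanishingKernel, Polynomial.eval_prod, div_eq_inv_mul, mul_assoc]

lemma iteratedDeriv_vanishingKernel_center (hg : ContDiff ℝ ∞ g) (hg₀ : g 0 = 1) {j : ℕ}
    (hj : j ≤ p) : iteratedDeriv j (vanishingKernel g s l Z p q m) l =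
      if j = p then (p.factorial : ℂ) else 0 := by
  refine (iteratedDeriv_sub_pow_mul hj ((contDiff_prod_one_sub_div_pow l Z q).mul
    ((contDiff_comp_mul_sub hg s l).pow m))).trans ?_
  simp [hg₀]

lemma iteratedDeriv_vanishingKernel_eq_zero (hg : ContDiff ℝ ∞ g) {z : ℝ} (hz : z ∈ Z)
    (hzl : z ≠ l) {j : ℕ} (hj : j < q) :
    iteratedDeriv j (vanishingKernel g s l Z p q m) z = 0 := by
  have hzl' : (z : ℂ) - l ≠ 0 := by exact_mod_cast sub_ne_zero.2 hzl
  have hfactor : vanishingKernel g s l Z p q m = (fun x : ℝ => (x : ℂ) - z) ^ q *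
      ((fun _ => (-((z : ℂ) - l)⁻¹) ^ q) * vanishingKernel g s l (Z.erase z) p q m) := by
    ext x
    have hlin : 1 - ((x : ℂ) - l) / (z - l) = (x - z) * -((z : ℂ) - l)⁻¹ := by field_simp; ring
    simp only [vanishingKernel, ← Finset.mul_prod_erase Z _ hz, Pi.mul_apply, Pi.pow_apply, hlin,
      mul_pow]
    ring
  rw [hfactor, iteratedDeriv_sub_pow_mul hj.le, if_neg hj.ne]
  exact contDiff_const.mul ((contDiff_sub_pow l p).mul
    ((contDiff_prod_one_sub_div_pow l _ q).mul ((contDiff_comp_mul_sub hg s l).pow m)))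

lemma hasJetBound_sub (h : 1 ≤ |x - l|) :
    HasJetBound n (fun y : ℝ => (y : ℂ) - l) x 1 |x - l| := by
  have hl : (fun y : ℝ => (y : ℂ) - l) = fun y : ℝ => -(l : ℂ) + 1 * y := by ext y; ring
  rw [hl]
  refine hasJetBound_affine (le_of_eq ?_) (by simpa using h)
  rw [one_mul, neg_add_eq_sub, ← ofReal_sub, norm_real, Real.norm_eq_abs]

lemma hasJetBound_one_sub_div {z : ℝ} (hzl : z ≠ l) (hzx : |z - l| ≤ |x - l|) (h : 1 ≤ |x - l|) :
    HasJetBound n (fun y : ℝ => 1 - ((y : ℂ) - l) / (z - l)) x 1 (2 * |x - l| / |z - l|) := by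
  have hzl' : (z : ℂ) - l ≠ 0 := by exact_mod_cast sub_ne_zero.2 hzl
  have : 0 < |z - l| := abs_pos.2 (sub_ne_zero.2 hzl)
  have haffine : (fun y : ℝ => 1 - ((y : ℂ) - l) / (z - l)) =
      fun y : ℝ => (z : ℂ) / (z - l) + (-1 / (z - l)) * y := by
    ext y; field_simp; ring
  rw [haffine]
  refine hasJetBound_affine ?_ ?_
  · have hval : (z : ℂ) / (z - l) + (-1 / (z - l)) * x = ((z - x : ℝ) : ℂ) / ((z - l : ℝ) : ℂ) := by
      push_cast; ring
    rw [hval, norm_div, norm_real, norm_real, Real.norm_eq_abs, Real.norm_eq_abs]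
    gcongr
    calc |z - x| ≤ |z - l| + |l - x| := abs_sub_le z l x
      _ ≤ 2 * |x - l| := by rw [abs_sub_comm l x]; linarith
  · rw [← ofReal_sub, norm_div, norm_neg, norm_one, norm_real, Real.norm_eq_abs]
    gcongr
    linarith

lemma hasJetBound_vanishingKernel (hg : ContDiff ℝ ∞ g) (hgC : HasWeightedBound 1 n g C)
    (hs : 0 < s) (hs₁ : s ≤ 1) (hZ : ∀ z ∈ Z, z ≠ l ∧ |z - l| ≤ |x - l|) (hx : 1 ≤ |x - l|) :
    HasJetBound n (vanishingKernel g s l Z p q m) x (p + (Z.card * q + m))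
      (|x - l| ^ p * ((∏ z ∈ Z, 2 * |x - l| / |z - l|) ^ q * (C / (s * |x - l|)) ^ m)) := by
  have hxl : x ≠ l := fun h => by norm_num [h] at hx
  have hpow : HasJetBound n ((fun y : ℝ => (y : ℂ) - l) ^ p) x p (|x - l| ^ p) := by
    simpa using (hasJetBound_sub hx).pow (ofRealCLM.contDiff.sub contDiff_const) zero_le_one p
  have hprod : HasJetBound n (∏ z ∈ Z, (fun y : ℝ => 1 - ((y : ℂ) - l) / (z - l)) ^ q) x
      (Z.card * q) ((∏ z ∈ Z, 2 * |x - l| / |z - l|) ^ q) := by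
    rw [← Finset.prod_pow]
    refine .prod q.cast_nonneg (fun z _ => (contDiff_one_sub_div l z).pow q) fun z hz => ?_
    simpa using (hasJetBound_one_sub_div (hZ z hz).1 (hZ z hz).2 hx).pow
      (contDiff_one_sub_div l z) zero_le_one q
  have hdecay : HasJetBound n ((fun y => g (s * (y - l))) ^ m) x m ((C / (s * |x - l|)) ^ m) := by
    simpa using (hgC.hasJetBound_comp_mul_sub hg hs hs₁ hxl).pow
      (contDiff_comp_mul_sub hg s l) zero_le_one m
  have hprod_contDiff := contDiff_prod_one_sub_div_pow l Z q
  have hdecay_contDiff := (contDiff_comp_mul_sub hg s l).pow m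
  exact hpow.mul (contDiff_sub_pow l p) (hprod_contDiff.mul hdecay_contDiff) p.cast_nonneg
    hpow.nonneg (hprod.mul hprod_contDiff hdecay_contDiff (by positivity) hprod.nonneg hdecay)

end VanishingKernel

section KernelEstimates

variable {δ η c r y C : ℝ} {Q q n N : ℕ}

lemma IsSeparatedBy.mono {Λ Λ' : Set ℝ} (h : IsSeparatedBy δ Λ) (hΛ : Λ' ⊆ Λ) :
    IsSeparatedBy δ Λ' :=
  fun x hx y hy => h x (hΛ hx) y (hΛ hy)

lemma pow_mul_factorial_le_prod_abs_sub (hδ : 0 < δ) {l : ℝ} {Z : Finset ℝ} (hl : l ∉ Z)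
    (h : IsSeparatedBy δ (insert l (Z : Set ℝ))) :
    (δ / 2) ^ Z.card * Z.card.factorial ≤ ∏ z ∈ Z, |z - l| := by
  induction Z using Finset.induction_on_max_value (fun z => |z - l|) with
  | empty => simp
  | insert a Z ha hmax ih =>
    have hinter : insert l ((insert a Z : Finset ℝ) : Set ℝ) ∩ Icc (l - |a - l|) (l + |a - l|) =
        (insert l (insert a Z) : Finset ℝ) := by
      rw [← Finset.coe_insert]
      refine inter_eq_left.2 fun z hz => ?_
      rw [← Real.closedBall_eq_Icc, mem_closedBall, Real.dist_eq]
      simp only [Finset.coe_insert, mem_insert_iff, Finset.mem_coe] at hz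
      rcases hz with rfl | rfl | hz
      · simp
      · exact le_rfl
      · exact hmax z hz
    have hcount := h.ncard_inter_Icc_le hδ
      (show l - |a - l| ≤ l + |a - l| by linarith [abs_nonneg (a - l)])
    rw [hinter, ncard_coe_finset, Finset.card_insert_of_notMem hl,
      Finset.card_insert_of_notMem ha] at hcount
    have hdist : δ / 2 * (Z.card + 1) ≤ |a - l| := by
      push_cast at hcount
      have hcount' : (Z.card : ℝ) + 1 ≤ (l + |a - l| - (l - |a - l|)) / δ := by linarith
      rw [le_div_iff₀ hδ] at hcount'
      linarith
    have ih' := ih (fun hmem => hl (Finset.mem_insert_of_mem hmem))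
      (h.mono (insert_subset_insert (Finset.coe_subset.2 (Finset.subset_insert a Z))))
    rw [Finset.prod_insert ha, Finset.card_insert_of_notMem ha, Nat.factorial_succ]
    calc (δ / 2) ^ (Z.card + 1) * ((Z.card + 1) * Z.card.factorial : ℕ)
        = (δ / 2 * (Z.card + 1)) * ((δ / 2) ^ Z.card * Z.card.factorial) := by push_cast; ring
      _ ≤ |a - l| * ∏ z ∈ Z, |z - l| := by gcongr

lemma prod_div_abs_sub_le (hδ : 0 < δ) (hy : 0 ≤ y) {l : ℝ} {Z : Finset ℝ} (hl : l ∉ Z)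
    (h : IsSeparatedBy δ (insert l (Z : Set ℝ))) :
    ∏ z ∈ Z, 2 * y / |z - l| ≤ (4 * y / δ) ^ Z.card / Z.card.factorial := by
  rw [Finset.prod_div_distrib, Finset.prod_const]
  calc (2 * y) ^ Z.card / ∏ z ∈ Z, |z - l|
      ≤ (2 * y) ^ Z.card / ((δ / 2) ^ Z.card * Z.card.factorial) := by
        gcongr
        exact pow_mul_factorial_le_prod_abs_sub hδ hl h
    _ = (4 * y / δ) ^ Z.card / Z.card.factorial := by
        rw [← div_div, ← div_pow]; congr 2; field_simp; ring

lemma pow_div_factorial_le_pow (hn : n ≤ N) (hN : 0 < N) (hy : N ≤ y) :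
    y ^ n / n.factorial ≤ (3 * y / N) ^ N := by
  have hN' : (0 : ℝ) < N := by exact_mod_cast hN
  have hy' : 1 ≤ y / N := by rwa [le_div_iff₀ hN', one_mul]
  have hexp : Real.exp N ≤ 3 ^ N := by
    rw [← mul_one (N : ℝ), Real.exp_nat_mul]
    gcongr
    linarith [Real.exp_one_lt_d9]
  calc y ^ n / n.factorial = (y / N) ^ n * ((N : ℝ) ^ n / n.factorial) := by
        rw [div_pow]; field_simp
    _ ≤ (y / N) ^ N * 3 ^ N := by
        gcongr
        exact (Real.pow_div_factorial_le_exp _ hN'.le n).trans hexp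
    _ = (3 * y / N) ^ N := by rw [← mul_pow]; ring

/- The polynomial factor grows like `(4y/δ)ⁿ/n!` and `g(s(x-l))` decays like `1/y`: the ratio of
the two bases is `48 C² q² N / (δ η² y)`, which is at most `r / (2y)` for this choice of `c`. -/
lemma prod_pow_mul_decay_pow_le {l : ℝ} {Z : Finset ℝ} (hC : 0 < C) (hδ : 0 < δ) (hη : 0 < η)
    (hq : 0 < q) (hN : 0 < N) (hr : 0 < r) (hy : r ≤ y)
    (hc : c ≤ (192 * C ^ 2 * q ^ 2)⁻¹ * δ * η ^ 2) (hNc : N ≤ 2 * (c * r)) (hNδ : N ≤ 4 * r / δ)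
    (hl : l ∉ Z) (hZ : IsSeparatedBy δ (insert l (Z : Set ℝ))) (hZN : Z.card ≤ N) :
    (∏ z ∈ Z, 2 * y / |z - l|) ^ q * (C / (η / (2 * q * N) * y)) ^ (2 * q * N) ≤
      (r / (2 * y)) ^ (q * N) := by
  have : (0 : ℝ) < N := by exact_mod_cast hN
  have : (0 : ℝ) < q := by exact_mod_cast hq
  have hy' : 0 < y := hr.trans_le hy
  have hprod : ∏ z ∈ Z, 2 * y / |z - l| ≤ (3 * (4 * y / δ) / N) ^ N :=
    (prod_div_abs_sub_le hδ hy'.le hl hZ).trans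
      (pow_div_factorial_le_pow hZN hN (hNδ.trans (by gcongr)))
  have hbase : 3 * (4 * y / δ) / N * (C / (η / (2 * q * N) * y)) ^ 2 ≤ r / (2 * y) := by
    have hhalf : 48 * C ^ 2 * q ^ 2 / (δ * η ^ 2) * N ≤ r / 2 := by
      calc 48 * C ^ 2 * q ^ 2 / (δ * η ^ 2) * N
          ≤ 48 * C ^ 2 * q ^ 2 / (δ * η ^ 2) *
            (2 * (((192 * C ^ 2 * q ^ 2)⁻¹ * δ * η ^ 2) * r)) := by
            gcongr
            exact hNc.trans (by gcongr)
        _ = r / 2 := by field_simp; ring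
    calc 3 * (4 * y / δ) / N * (C / (η / (2 * q * N) * y)) ^ 2
        = 48 * C ^ 2 * q ^ 2 / (δ * η ^ 2) * N / y := by field_simp; ring
      _ ≤ r / 2 / y := by gcongr
      _ = r / (2 * y) := by rw [div_div]
  calc (∏ z ∈ Z, 2 * y / |z - l|) ^ q * (C / (η / (2 * q * N) * y)) ^ (2 * q * N)
      ≤ ((3 * (4 * y / δ) / N) ^ N) ^ q * (C / (η / (2 * q * N) * y)) ^ (2 * q * N) := by gcongr
    _ = (3 * (4 * y / δ) / N * (C / (η / (2 * q * N) * y)) ^ 2) ^ (q * N) := by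
        rw [mul_pow _ _ (q * N), ← pow_mul, ← pow_mul]; congr 2 <;> ring
    _ ≤ (r / (2 * y)) ^ (q * N) := by gcongr

lemma eventually_mul_pow_le_two_pow (K : ℝ) (d : ℕ) :
    ∀ᶠ N : ℕ in atTop, K * (N : ℝ) ^ d ≤ 2 ^ N := by
  have h := (tendsto_pow_const_div_const_pow_of_one_lt d (one_lt_two (α := ℝ))).const_mul K
  rw [mul_zero] at h
  filter_upwards [h.eventually (gt_mem_nhds one_pos)] with N hN
  rw [← mul_div_assoc, div_lt_one (by positivity)] at hN
  exact hN.le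

lemma pow_mul_pow_div_le {M : ℕ} (hq : 0 < q) (hr : 0 < r) (hy : r ≤ y) (hN : Q + M ≤ N) :
    y ^ Q * (r / (2 * y)) ^ (q * N) * (r * (2 * y) ^ M) ≤
      2 ^ M * r ^ (Q + M + 1) * (1 / 2) ^ N := by
  have hy' : 0 < y := hr.trans_le hy
  have hry : r / y ≤ 1 := by rwa [div_le_one hy']
  have hfactor : r / (2 * y) = (r / y) * (1 / 2) := by field_simp
  have hpow : (r / (2 * y)) ^ (q * N) ≤ (r / y) ^ (Q + M) * (1 / 2) ^ N := by
    calc (r / (2 * y)) ^ (q * N) ≤ (r / (2 * y)) ^ N := by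
          apply pow_le_pow_of_le_one (by positivity) _ (Nat.le_mul_of_pos_left _ hq)
          rw [hfactor]; nlinarith [div_pos hr hy']
      _ = (r / y) ^ N * (1 / 2) ^ N := by rw [hfactor, mul_pow]
      _ ≤ (r / y) ^ (Q + M) * (1 / 2) ^ N := by
          gcongr ?_ * _
          exact pow_le_pow_of_le_one (by positivity) hry hN
  calc y ^ Q * (r / (2 * y)) ^ (q * N) * (r * (2 * y) ^ M)
      ≤ y ^ Q * ((r / y) ^ (Q + M) * (1 / 2) ^ N) * (r * (2 * y) ^ M) := by gcongr
    _ = 2 ^ M * r ^ (Q + M + 1) * (1 / 2) ^ N := by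
        rw [mul_pow, div_pow, pow_add y, pow_add r (Q + M)]; field_simp

lemma eventually_pow_mul_pow_div_le (hc : 0 < c) (hq : 0 < q) (Q M : ℕ) (l : ℝ) :
    ∀ᶠ r in atTop, ∀ x, r < |x - l| →
      (Q + 3 * q * ⌈c * r⌉₊ : ℝ) ^ Q * (|x - l| ^ Q * (r / (2 * |x - l|)) ^ (q * ⌈c * r⌉₊)) ≤
        r⁻¹ / (1 + |x|) ^ M := by
  have hceil : Tendsto (fun r : ℝ => ⌈c * r⌉₊) atTop atTop :=
    tendsto_nat_ceil_atTop.comp (tendsto_id.const_mul_atTop hc)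
  filter_upwards [eventually_ge_atTop (1 + |l|), hceil.eventually (eventually_ge_atTop (Q + M)),
    hceil.eventually (eventually_ge_atTop 1), hceil.eventually (eventually_mul_pow_le_two_pow
      ((Q + 3 * q : ℝ) ^ Q * 2 ^ M * (1 / c) ^ (Q + M + 1)) (Q + (Q + M + 1)))]
    with r hrl hNQM hN₁ hN x hx
  set N := ⌈c * r⌉₊
  have hr : 0 < r := by linarith [abs_nonneg l]
  have hN₁' : (1 : ℝ) ≤ N := by exact_mod_cast hN₁
  have hQN : (Q + 3 * q * N : ℝ) ≤ (Q + 3 * q) * N := by nlinarith [(Q.cast_nonneg : (0 : ℝ) ≤ Q)]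
  have hxy : 1 + |x| ≤ 2 * |x - l| := by
    have : |x| ≤ |x - l| + |l| := by simpa using abs_add_le (x - l) l
    linarith
  have hrN : r ≤ 1 / c * N := by
    rw [one_div, inv_mul_eq_div, le_div_iff₀ hc, mul_comm]; exact Nat.le_ceil _
  have hden : r⁻¹ / (1 + |x|) ^ M = 1 / (r * (1 + |x|) ^ M) := by field_simp
  rw [hden, le_div_iff₀ (by positivity)]
  calc (Q + 3 * q * N : ℝ) ^ Q * (|x - l| ^ Q * (r / (2 * |x - l|)) ^ (q * N)) *
        (r * (1 + |x|) ^ M)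
      ≤ ((Q + 3 * q) * N : ℝ) ^ Q * (|x - l| ^ Q * (r / (2 * |x - l|)) ^ (q * N)) *
        (r * (2 * |x - l|) ^ M) := by gcongr
    _ = ((Q + 3 * q) * N : ℝ) ^ Q * (|x - l| ^ Q * (r / (2 * |x - l|)) ^ (q * N) *
        (r * (2 * |x - l|) ^ M)) := by ring
    _ ≤ ((Q + 3 * q) * N : ℝ) ^ Q * (2 ^ M * (1 / c * N) ^ (Q + M + 1) * (1 / 2) ^ N) := by
        have hpow := pow_mul_pow_div_le hq hr hx.le hNQM
        refine mul_le_mul_of_nonneg_left (hpow.trans ?_) (by positivity)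
        gcongr
    _ = (((Q + 3 * q : ℝ) ^ Q * 2 ^ M * (1 / c) ^ (Q + M + 1)) * (N : ℝ) ^ (Q + (Q + M + 1))) *
        (1 / 2) ^ N := by
        rw [mul_pow, mul_pow (1 / c), pow_add (N : ℝ) Q]; ring
    _ ≤ 2 ^ N * (1 / 2) ^ N := by gcongr
    _ = 1 := by rw [← mul_pow]; norm_num

lemma hasJetBound_vanishingKernel_of_separated {g : ℝ → ℂ} {l x : ℝ} {Z : Finset ℝ} {p : ℕ}
    (hg : ContDiff ℝ ∞ g) (hgC : HasWeightedBound 1 Q g C) (hC : 0 < C) (hδ : 0 < δ) (hη : 0 < η)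
    (hq : 0 < q) (hN : 0 < N) (hηN : η ≤ N) (hr : 1 ≤ r) (hx : r ≤ |x - l|)
    (hc : c ≤ (192 * C ^ 2 * q ^ 2)⁻¹ * δ * η ^ 2) (hNc : N ≤ 2 * (c * r)) (hNδ : N ≤ 4 * r / δ)
    (hp : p ≤ Q) (hZr : ∀ z ∈ Z, z ≠ l ∧ |z - l| ≤ r)
    (hZ : IsSeparatedBy δ (insert l (Z : Set ℝ))) (hZN : Z.card ≤ N) :
    HasJetBound Q (vanishingKernel g (η / (2 * q * N)) l Z p q (2 * q * N)) x 1
      ((Q + 3 * q * N : ℝ) ^ Q * (|x - l| ^ Q * (r / (2 * |x - l|)) ^ (q * N))) := by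
  have hN' : (1 : ℝ) ≤ N := by exact_mod_cast hN
  have hq' : (1 : ℝ) ≤ q := by exact_mod_cast hq
  have hp' : (p : ℝ) ≤ Q := by exact_mod_cast hp
  have hZN' : (Z.card : ℝ) * q ≤ N * q := by gcongr
  have hqN : (N : ℝ) ≤ q * N := by nlinarith
  have hs : η / (2 * q * N) ≤ 1 := by rw [div_le_one (by positivity)]; linarith
  have hl : l ∉ Z := fun h => (hZr l h).1 rfl
  have hx₁ : 1 ≤ |x - l| := hr.trans hx
  refine ((hasJetBound_vanishingKernel (p := p) (q := q) (m := 2 * q * N) hg hgC (by positivity) hs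
    (fun z hz => ⟨(hZr z hz).1, (hZr z hz).2.trans hx⟩) hx₁).of_le
    (B' := Q + 3 * q * N) (by positivity) ?_ ?_).mono zero_le_one ?_
  · push_cast; linarith
  · linarith [(Q.cast_nonneg : (0 : ℝ) ≤ Q)]
  · gcongr ?_ * (?_ * ?_)
    · exact pow_le_pow_right₀ hx₁ hp
    · exact prod_pow_mul_decay_pow_le hC hδ hη hq hN (by linarith) hx hc hNc hNδ hl hZ hZN

lemma exists_coe_eq_vanishingKernel {g : ℝ → ℂ} (hg : HasSpectrumIn (closedBall 0 1) g)
    (hη : 0 < η) (hq : 0 < q) (hN : 0 < N) (l : ℝ) (Z : Finset ℝ) (p : ℕ) :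
    ∃ φ : 𝓢(ℝ, ℂ), ⇑φ = vanishingKernel g (η / (2 * q * N)) l Z p q (2 * q * N) ∧
      HasSpectrumIn (closedBall 0 η) φ := by
  have hspec := hasSpectrumIn_vanishingKernel (l := l) (Z := Z) (p := p) (q := q)
    (m := 2 * q * N) (s := η / (2 * q * N)) hg (by positivity)
    (Nat.one_le_iff_ne_zero.2 (by positivity))
  have hradius : (2 * q * N : ℕ) * (η / (2 * q * N)) = η := by push_cast; field_simp
  rw [hradius] at hspec
  obtain ⟨φ, hφ⟩ := hspec.exists_coe_eq
  exact ⟨φ, hφ, hφ ▸ hspec⟩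

lemma IsSeparatedBy.exists_finset_inter_Icc {A : Set ℝ} (h : IsSeparatedBy δ A) (hδ : 0 < δ)
    (l r : ℝ) : ∃ Z : Finset ℝ, (∀ z, z ∈ Z ↔ z ≠ l ∧ z ∈ A ∧ |z - l| ≤ r) ∧
      Z.card ≤ (A ∩ Icc (l - r) (l + r)).ncard := by
  have hfin := h.finite_inter_Icc hδ (l - r) (l + r)
  refine ⟨hfin.toFinset.erase l, fun z => ?_, ?_⟩
  · rw [Finset.mem_erase, Set.Finite.mem_toFinset, mem_inter_iff, ← Real.closedBall_eq_Icc,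
      mem_closedBall, Real.dist_eq]
  · rw [ncard_eq_toFinset_card _ hfin]
    exact Finset.card_erase_le

lemma hasJetBound_vanishingKernel_of_mem {g : ℝ → ℂ} {s l x B w : ℝ} {Z : Finset ℝ} {p m : ℕ}
    (hg : ContDiff ℝ ∞ g) (hx : x ∈ Z) (hxl : x ≠ l) (hB : 0 ≤ B) (hw : 0 ≤ w) :
    HasJetBound Q (vanishingKernel g s l Z p (Q + 1) m) x B w := fun j hj => by
  rw [iteratedDeriv_vanishingKernel_eq_zero hg hx hxl (Nat.lt_succ_of_le hj), norm_zero]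
  positivity

lemma natCeil_mul_le_div (hδ : 0 < δ) (hc : 0 ≤ c) (hcδ : c ≤ 3 / δ) (hr : δ ≤ r) :
    (⌈c * r⌉₊ : ℝ) ≤ 4 * r / δ := by
  have hr₀ : 0 < r := hδ.trans_le hr
  have hcr : c * r ≤ 3 / δ * r := by gcongr
  have hrδ : 1 ≤ r / δ := by rwa [le_div_iff₀ hδ, one_mul]
  linarith [Nat.ceil_lt_add_one (mul_nonneg hc hr₀.le),
    show 4 * r / δ = 3 / δ * r + r / δ by ring]

lemma exists_vanishing_kernel (Q : ℕ) : ∃ κ > (0 : ℝ), ∀ δ > (0 : ℝ), ∀ η > (0 : ℝ), ∀ c > (0 : ℝ),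
    c ≤ 3 / δ → c ≤ κ * δ * η ^ 2 → ∀ (M : ℕ) (l : ℝ), ∀ᶠ r in atTop, ∀ p ≤ Q, ∀ A : Set ℝ,
      IsSeparatedBy δ (insert l A) → ((A ∩ Icc (l - r) (l + r)).ncard : ℝ) ≤ c * r →
      ∃ φ : 𝓢(ℝ, ℂ), HasSpectrumIn (closedBall 0 η) φ ∧
        (∀ j ≤ p, iteratedDeriv j φ l = if j = p then (p.factorial : ℂ) else 0) ∧
        ∀ x ≠ l, x ∈ A ∨ r < |x - l| → HasJetBound Q φ x 1 (r⁻¹ / (1 + |x|) ^ M) := by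
  obtain ⟨g, hg₀, hg⟩ := exists_hasSpectrumIn_closedBall_one
  obtain ⟨C, hC, hgC⟩ := exists_pos_hasWeightedBound g 1 Q
  refine ⟨(192 * C ^ 2 * (Q + 1 : ℕ) ^ 2)⁻¹, by positivity, ?_⟩
  intro δ hδ η hη c hc hcδ hcκ M l
  filter_upwards [eventually_ge_atTop 1, eventually_ge_atTop δ,
    eventually_ge_atTop (c⁻¹ * (1 + η)), eventually_pow_mul_pow_div_le hc Q.succ_pos Q M l]
    with r hr₁ hrδ hrc hr p hp A hA hcard
  set N := ⌈c * r⌉₊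
  have hcr : 1 + η ≤ c * r := by rwa [inv_mul_le_iff₀ hc] at hrc
  have hNle : c * r ≤ N := Nat.le_ceil _
  have hNlt : (N : ℝ) < c * r + 1 := Nat.ceil_lt_add_one (by positivity)
  have hN : 0 < N := Nat.ceil_pos.2 (by positivity)
  have hNδ : (N : ℝ) ≤ 4 * r / δ := natCeil_mul_le_div hδ hc.le hcδ hrδ
  obtain ⟨Z, hmem, hZcard⟩ :=
    (hA.mono (subset_insert l A)).exists_finset_inter_Icc hδ l r
  have hZN : Z.card ≤ N := by exact_mod_cast (Nat.cast_le.2 hZcard).trans (hcard.trans hNle)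
  obtain ⟨φ, hφ, hspec⟩ := exists_coe_eq_vanishingKernel hg hη Q.succ_pos hN l Z p
  refine ⟨φ, hspec, fun j hj => ?_, fun x hxl hx => ?_⟩
  · rw [hφ]
    exact iteratedDeriv_vanishingKernel_center (g.smooth ⊤) hg₀ hj
  · rw [hφ]
    rcases lt_or_ge r |x - l| with hrx | hrx
    · exact (hasJetBound_vanishingKernel_of_separated (g.smooth ⊤) hgC hC hδ hη Q.succ_pos hN
        (by linarith) hr₁ hrx.le hcκ (by linarith) hNδ hp
        (fun z hz => ⟨((hmem z).1 hz).1, ((hmem z).1 hz).2.2⟩)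
        (hA.mono (insert_subset_insert fun z hz => ((hmem z).1 hz).2.1)) hZN).mono zero_le_one
        (hr x hrx)
    · exact hasJetBound_vanishingKernel_of_mem (g.smooth ⊤)
        ((hmem x).2 ⟨hxl, hx.resolve_right hrx.not_gt, hrx⟩) hxl zero_le_one (by positivity)

end KernelEstimates

section Isolation

namespace DiracExpansion

variable {α : TemperedDist} (D : DiracExpansion α) {f : ℝ → ℂ} {δ η l B : ℝ}

/-- The contribution of the point `l` to the value of `α` at `f` modulated by the character of
frequency `ξ`. -/
def contribution (f : ℝ → ℂ) (l ξ : ℝ) : ℂ :=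
  jetSum D.order (D.coeff l) l (character ξ * f)

lemma hasSum_contribution {f : ℝ → ℂ} {ξ : ℝ} {φ : 𝓢(ℝ, ℂ)} (hφ : ⇑φ = character ξ * f) :
    HasSum (fun l : TDsupport α => D.contribution f l ξ) (α φ) := by
  simpa only [contribution, hφ] using D.hasSum φ

lemma exists_top_coeff (hl : l ∈ TDsupport α) :
    ∃ p ≤ D.order, D.coeff l p ≠ 0 ∧ ∀ j ≤ D.order, p < j → D.coeff l j = 0 := by
  classical
  let P (p : ℕ) : Prop := D.coeff l p ≠ 0
  obtain ⟨q, hq, hqP⟩ := D.exists_coeff_ne_zero l hl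
  refine ⟨Nat.findGreatest P D.order, Nat.findGreatest_le _,
    Nat.findGreatest_spec (P := P) hq hqP,
    fun j hj hlt => ?_⟩
  simpa [P] using Nat.findGreatest_is_greatest hlt hj

lemma const_nonneg : 0 ≤ D.const := by
  simpa using (norm_nonneg _).trans (D.norm_coeff_le 0 0 D.order.zero_le)

lemma norm_contribution_le (hf : ContDiff ℝ ∞ f)
    (h : HasJetBound D.order f l 1 (B / (1 + |l|) ^ (D.growth + 2))) (ξ : ℝ) :
    ‖D.contribution f l ξ‖ ≤
      (D.order + 1) * D.const * B * ((1 + |l|) ^ 2)⁻¹ * (1 + 2 * Real.pi * |ξ|) ^ D.order := by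
  have : 0 < 1 + |l| := by positivity
  refine (norm_jetSum_le (D.norm_coeff_le l) (h.character_mul hf ξ)).trans_eq ?_
  rw [pow_add]
  field_simp

theorem exists_isolating_function : ∃ κ > (0 : ℝ), ∀ δ > 0, ∀ η > 0, ∀ c > 0, c ≤ 3 / δ →
    c ≤ κ * δ * η ^ 2 → ∀ l ∈ TDsupport α, ∃ a ≠ (0 : ℂ), ∃ K ≥ 0, ∀ᶠ r in atTop, ∀ A : Set ℝ,
    IsSeparatedBy δ (insert l A) → ((A ∩ Icc (l - r) (l + r)).ncard : ℝ) ≤ c * r →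
    ∃ φ : 𝓢(ℝ, ℂ), HasSpectrumIn (closedBall 0 η) φ ∧
      (∀ ξ, D.contribution φ l ξ = a * character ξ l) ∧
      ∀ x ≠ l, x ∈ A ∨ r < |x - l| → ∀ ξ, ‖D.contribution φ x ξ‖ ≤
        K * r⁻¹ * ((1 + |x|) ^ 2)⁻¹ * (1 + 2 * Real.pi * |ξ|) ^ D.order := by
  obtain ⟨κ, hκ, hkernel⟩ := exists_vanishing_kernel D.order
  refine ⟨κ, hκ, fun δ hδ η hη c hc hcδ hcκ l hl => ?_⟩
  obtain ⟨p, hp, hcoeff, htop⟩ := D.exists_top_coeff hl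
  refine ⟨D.coeff l p * p.factorial, mul_ne_zero hcoeff (by exact_mod_cast p.factorial_ne_zero),
    (D.order + 1) * D.const, mul_nonneg (by positivity) D.const_nonneg, ?_⟩
  filter_upwards [hkernel δ hδ η hη c hc hcδ hcκ (D.growth + 2) l] with r hr A hA hcard
  obtain ⟨φ, hφ, hjet, hbound⟩ := hr p hp A hA hcard
  refine ⟨φ, hφ, fun ξ => ?_, fun x hxl hx =>
    D.norm_contribution_le (φ.smooth ⊤) (hbound x hxl hx)⟩
  rw [contribution, jetSum_character_mul_of_jet_eq_zero hp (φ.smooth ⊤) htop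
    (fun j hj => by rw [hjet j hj.le, if_neg hj.ne]), hjet p le_rfl, if_pos rfl]

end DiracExpansion

lemma norm_le_tsum_of_hasSum_zero {ι E : Type*} [NormedAddCommGroup E] {f : ι → E}
    {b : ι → ℝ} {i : ι} (hf : HasSum f 0) (hb : Summable b) (hb₀ : ∀ j, 0 ≤ b j)
    (h : ∀ j ≠ i, ‖f j‖ ≤ b j) : ‖f i‖ ≤ ∑' j, b j := by
  classical
  have hsub : HasSum (fun j => (if j = i then f i else 0) - f j) (f i) := by
    simpa using (hasSum_ite_eq i (f i)).sub hf
  refine hsub.norm_le_of_bounded hb.hasSum fun j => ?_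
  split_ifs with hj
  · simpa [hj] using hb₀ i
  · simpa using h j hj

lemma nonpos_of_eventually_le_mul_inv {a K : ℝ} (h : ∀ᶠ r in atTop, a ≤ K * r⁻¹) : a ≤ 0 :=
  ge_of_tendsto (by simpa using tendsto_inv_atTop_zero.const_mul K) h

end Isolation

section RelativelyDense

variable {α : TemperedDist} {δ : ℝ}

lemma IsSeparatedBy.ncard_inter_Icc_le_mul {Λ : Set ℝ} {r : ℝ} (h : IsSeparatedBy δ Λ)
    (hδ : 0 < δ) (hr : δ ≤ r) (x : ℝ) : ((Λ ∩ Icc (x - r) (x + r)).ncard : ℝ) ≤ 3 / δ * r := by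
  have hcard := h.ncard_inter_Icc_le hδ (show x - r ≤ x + r by linarith)
  have hr' : 1 ≤ r / δ := (one_le_div hδ).2 hr
  calc _ ≤ 2 * (r / δ) + 1 := by convert hcard using 1; ring
    _ ≤ 3 * (r / δ) := by linarith
    _ = 3 / δ * r := by ring

lemma exists_le_mul_sq {a : ℝ} (b : ℝ) (ha : 0 < a) : ∃ η > 0, b ≤ a * η ^ 2 := by
  have h := ((tendsto_pow_atTop two_ne_zero).const_mul_atTop ha).eventually_ge_atTop b
  exact ((eventually_gt_atTop 0).and h).exists

lemma TDsupport_fourierTD_nonempty (h : (TDsupport α).Nonempty) :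
    (TDsupport (fourierTD α)).Nonempty := by
  obtain ⟨_, hx⟩ := h
  obtain ⟨φ, -, hφ⟩ := hx univ isOpen_univ trivial
  by_contra hS
  rw [not_nonempty_iff_eq_empty] at hS
  refine hφ ?_
  rw [← FourierTransform.fourier_fourierInv_eq (F := 𝓢(ℝ, ℂ)) φ, ← fourierTD_apply]
  exact apply_eq_zero_of_disjoint (hS ▸ disjoint_empty _)

-- If `α` had a gap of radius `η` around `x`, then `fourierTD α` would annihilate all functions with
-- spectrum in that gap, in particular one that isolates a single point of its support.
theorem exists_abs_sub_le_of_separated_fourier (hδ : 0 < δ)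
    (hS : IsSeparatedBy δ (TDsupport (fourierTD α))) (hne : (TDsupport α).Nonempty) :
    ∃ R, ∀ x : ℝ, ∃ l ∈ TDsupport α, |l - x| ≤ R := by
  obtain ⟨D⟩ := nonempty_diracExpansion hδ hS
  obtain ⟨s₀, hs₀⟩ := TDsupport_fourierTD_nonempty hne
  obtain ⟨κ, hκ, hisolate⟩ := D.exists_isolating_function
  obtain ⟨η, hη, hηκ⟩ := exists_le_mul_sq (3 / δ) (mul_pos hκ hδ)
  obtain ⟨a, ha, K, hK₀, hK⟩ := hisolate δ hδ η hη (3 / δ) (by positivity) le_rfl hηκ s₀ hs₀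
  refine ⟨η, fun x => ?_⟩
  by_contra! hgap
  have hdisj : Disjoint (-((· - -x) ⁻¹' closedBall 0 η)) (TDsupport α) := by
    refine disjoint_left.2 fun y hy hyα => (hgap y hyα).not_ge ?_
    simpa [Real.dist_eq] using hy
  refine (norm_pos_iff.2 ha).not_ge (nonpos_of_eventually_le_mul_inv
    (K := K * (1 + 2 * Real.pi * |-x|) ^ D.order *
      ∑' s : TDsupport (fourierTD α), ((1 + |(s : ℝ)|) ^ 2)⁻¹) ?_)
  filter_upwards [hK, eventually_ge_atTop δ, eventually_gt_atTop 0] with r hr hrδ hr₀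
  obtain ⟨φ, hφ, hmain, hrest⟩ := hr _ (by rwa [insert_eq_of_mem hs₀])
    (hS.ncard_inter_Icc_le_mul hδ hrδ s₀)
  have hspec := hφ.character_mul (-x)
  obtain ⟨Φ, hΦ⟩ := hspec.exists_coe_eq
  have hsum := D.hasSum_contribution hΦ
  rw [(hΦ ▸ hspec : HasSpectrumIn _ Φ).fourierTD_apply_eq_zero hdisj] at hsum
  have hle := norm_le_tsum_of_hasSum_zero (i := ⟨s₀, hs₀⟩) hsum
    ((hS.summable_inv_one_add_abs_sq hδ).mul_left (K * r⁻¹ * (1 + 2 * Real.pi * |-x|) ^ D.order))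
    (fun s => by positivity)
    fun s hs => (hrest s (by simpa [Subtype.ext_iff] using hs) (.inl s.2) (-x)).trans_eq
      (by ring)
  rw [hmain, norm_mul, norm_character, mul_one, tsum_mul_left] at hle
  linarith

end RelativelyDense

section Correlation

variable {V : Set ℝ} {f : ℝ → ℂ} {n : ℕ} {σ x : ℝ}

lemma character_mul_conj_character (ξ x y : ℝ) :
    character ξ x * (starRingEnd ℂ) (character ξ y) = character ξ (x - y) := by
  have hy : character (-ξ) y = character (-y) ξ := by
    rw [character, character, neg_mul, neg_mul, mul_comm]
  rw [conj_character, hy, character_comm ξ x, ← character_add_left, character_comm, sub_eq_add_neg]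

lemma HasSpectrumIn.integral_character_mul_eq_zero (h : HasSpectrumIn V f) (hx : -x ∉ V) :
    ∫ ξ, character ξ x * f ξ = 0 := by
  obtain ⟨ψ, rfl, hψ⟩ := h
  rw [← fourier_eq_integral_character, fourier_fourier_apply,
    image_eq_zero_of_notMem_tsupport fun hmem => hx (hψ hmem)]

lemma integrable_add_mul_abs_pow_mul_norm (k : 𝓢(ℝ, ℂ)) (a b : ℝ) (n : ℕ) :
    Integrable fun ξ => (a + b * |ξ|) ^ n * ‖k ξ‖ := by
  simp_rw [add_pow, Finset.sum_mul]
  refine integrable_finsetSum _ fun j _ => ?_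
  refine ((k.integrable_pow_mul volume (n - j)).const_mul (a ^ j * b ^ (n - j) * n.choose j)).congr
    (.of_forall fun ξ => ?_)
  simp only [Real.norm_eq_abs, mul_pow]
  ring

lemma integrable_one_add_abs_pow_mul_norm (k : 𝓢(ℝ, ℂ)) (σ : ℝ) (n : ℕ) :
    Integrable fun ξ => (1 + 2 * Real.pi * |ξ + σ|) ^ n * (1 + 2 * Real.pi * |ξ|) ^ n * ‖k ξ‖ := by
  refine (integrable_add_mul_abs_pow_mul_norm k (1 + 2 * Real.pi * |σ|) (2 * Real.pi)
    (2 * n)).mono' (by fun_prop) (.of_forall fun ξ => ?_)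
  rw [Real.norm_of_nonneg (by positivity), two_mul n, pow_add]
  gcongr ?_ ^ n * ?_ ^ n * _
  · nlinarith [abs_add_le ξ σ, Real.pi_pos]
  · linarith [show 0 ≤ 2 * Real.pi * |σ| by positivity]

lemma hasSum_mul_conj {ι κ : Type*} {u : ι → ℂ} {v : κ → ℂ} {a b : ℂ} (hu : HasSum u a)
    (hv : HasSum v b) :
    HasSum (fun p : ι × κ => u p.1 * (starRingEnd ℂ) (v p.2)) (a * (starRingEnd ℂ) b) := by
  have hv' : HasSum (fun i => (starRingEnd ℂ) (v i)) ((starRingEnd ℂ) b) :=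
    hv.map _ continuous_conj
  have hprod : Summable fun p : ι × κ => u p.1 * (starRingEnd ℂ) (v p.2) :=
    summable_mul_of_summable_norm (f := u) (g := fun i => (starRingEnd ℂ) (v i))
      hu.summable.norm hv'.summable.norm
  exact hu.mul (g := fun i => (starRingEnd ℂ) (v i)) hv' hprod

namespace DiracExpansion

variable {α : TemperedDist} (D : DiracExpansion α) {g : ℝ → ℂ} {l l' b b' : ℝ} {k : 𝓢(ℝ, ℂ)}

/-- The integrand of `DiracExpansion.correlation`. -/
def correlationIntegrand (k f g : ℝ → ℂ) (σ l l' ξ : ℝ) : ℂ :=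
  k ξ * (D.contribution f l (ξ + σ) * (starRingEnd ℂ) (D.contribution g l' ξ))

/-- The contributions of `l` to `α` at `f` and of `l'` to `α` at `g`, with frequencies differing by
`σ`, correlated against the weight `k` on the frequencies. -/
def correlation (k f g : ℝ → ℂ) (σ l l' : ℝ) : ℂ :=
  ∫ ξ, D.correlationIntegrand k f g σ l l' ξ

/-- The constant in the bound `DiracExpansion.norm_correlation_le`. -/
def correlationConst (k : ℝ → ℂ) (σ : ℝ) : ℝ :=
  ∫ ξ, (1 + 2 * Real.pi * |ξ + σ|) ^ D.order * (1 + 2 * Real.pi * |ξ|) ^ D.order * ‖k ξ‖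

lemma correlationConst_nonneg (k : ℝ → ℂ) (σ : ℝ) : 0 ≤ D.correlationConst k σ :=
  integral_nonneg fun ξ => by positivity

lemma exists_norm_contribution_le (φ : 𝓢(ℝ, ℂ)) : ∃ b ≥ 0, ∀ l ξ, ‖D.contribution φ l ξ‖ ≤
    b * ((1 + |l|) ^ 2)⁻¹ * (1 + 2 * Real.pi * |ξ|) ^ D.order := by
  obtain ⟨B, hB⟩ := exists_hasWeightedBound φ (D.growth + 2) D.order
  exact ⟨(D.order + 1) * D.const * B, mul_nonneg (mul_nonneg (by positivity) D.const_nonneg)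
    hB.nonneg, fun l ξ => D.norm_contribution_le (φ.smooth ⊤) (hB.hasJetBound l) ξ⟩

lemma exists_contribution_mul_conj_eq (hf : ContDiff ℝ ∞ f) (hg : ContDiff ℝ ∞ g) (σ l l' : ℝ) :
    ∃ P : Polynomial ℂ, ∀ ξ : ℝ,
      D.contribution f l (ξ + σ) * (starRingEnd ℂ) (D.contribution g l' ξ) =
        character ξ (l - l') * P.eval (ξ : ℂ) := by
  obtain ⟨P, hP⟩ := exists_jetSum_character_mul_eq D.order (D.coeff l) l hf
  obtain ⟨Q, hQ⟩ := exists_jetSum_character_mul_eq D.order (D.coeff l') l' hg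
  refine ⟨.C (character σ l) * P.comp (.X + .C (σ : ℂ)) * Q.map (starRingEnd ℂ), fun ξ => ?_⟩
  have hQξ : (starRingEnd ℂ) (Q.eval (ξ : ℂ)) = (Q.map (starRingEnd ℂ)).eval (ξ : ℂ) := by
    simpa using (Polynomial.eval_map_apply (starRingEnd ℂ) (ξ : ℂ)).symm
  rw [contribution, contribution, hP, hQ, map_mul, hQξ, character_add_left,
    ← character_mul_conj_character]
  simp only [Polynomial.eval_mul, Polynomial.eval_C, Polynomial.eval_comp, Polynomial.eval_add,
    Polynomial.eval_X]
  push_cast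
  ring

lemma continuous_correlationIntegrand (k : 𝓢(ℝ, ℂ)) (hf : ContDiff ℝ ∞ f)
    (hg : ContDiff ℝ ∞ g) (σ l l' : ℝ) : Continuous (D.correlationIntegrand k f g σ l l') := by
  obtain ⟨P, hP⟩ := D.exists_contribution_mul_conj_eq hf hg σ l l'
  have heq : D.correlationIntegrand k f g σ l l' =
      fun ξ : ℝ => k ξ * (character (l - l') ξ * P.eval (ξ : ℂ)) :=
    funext fun ξ => by rw [correlationIntegrand, hP, character_comm]
  rw [heq]
  exact k.continuous.mul ((contDiff_character _).continuous.mul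
    (P.continuous.comp continuous_ofReal))

lemma norm_correlationIntegrand_le {ξ : ℝ}
    (h : ‖D.contribution f l (ξ + σ)‖ ≤ b * (1 + 2 * Real.pi * |ξ + σ|) ^ D.order)
    (h' : ‖D.contribution g l' ξ‖ ≤ b' * (1 + 2 * Real.pi * |ξ|) ^ D.order) :
    ‖D.correlationIntegrand k f g σ l l' ξ‖ ≤ b * b' *
      ((1 + 2 * Real.pi * |ξ + σ|) ^ D.order * (1 + 2 * Real.pi * |ξ|) ^ D.order * ‖k ξ‖) := by
  rw [correlationIntegrand, norm_mul, norm_mul, RCLike.norm_conj]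
  calc _ ≤ ‖k ξ‖ * (b * (1 + 2 * Real.pi * |ξ + σ|) ^ D.order *
        (b' * (1 + 2 * Real.pi * |ξ|) ^ D.order)) := by
        gcongr
        exact (norm_nonneg _).trans h
    _ = _ := by ring

lemma integral_norm_correlationIntegrand_le (k : 𝓢(ℝ, ℂ))
    (h : ∀ ξ, ‖D.contribution f l ξ‖ ≤ b * (1 + 2 * Real.pi * |ξ|) ^ D.order)
    (h' : ∀ ξ, ‖D.contribution g l' ξ‖ ≤ b' * (1 + 2 * Real.pi * |ξ|) ^ D.order) :
    ∫ ξ, ‖D.correlationIntegrand k f g σ l l' ξ‖ ≤ b * b' * D.correlationConst k σ := by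
  rw [correlationConst, ← integral_const_mul]
  exact integral_mono_of_nonneg (.of_forall fun ξ => norm_nonneg _)
    ((integrable_one_add_abs_pow_mul_norm k σ D.order).const_mul _)
    (.of_forall fun ξ => D.norm_correlationIntegrand_le (h _) (h' _))

lemma norm_correlation_le (k : 𝓢(ℝ, ℂ))
    (h : ∀ ξ, ‖D.contribution f l ξ‖ ≤ b * (1 + 2 * Real.pi * |ξ|) ^ D.order)
    (h' : ∀ ξ, ‖D.contribution g l' ξ‖ ≤ b' * (1 + 2 * Real.pi * |ξ|) ^ D.order) :
    ‖D.correlation k f g σ l l'‖ ≤ b * b' * D.correlationConst k σ :=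
  (norm_integral_le_integral_norm _).trans (D.integral_norm_correlationIntegrand_le k h h')

lemma correlation_eq_zero (hk : HasSpectrumIn V k) (hf : ContDiff ℝ ∞ f) (hg : ContDiff ℝ ∞ g)
    (hV : l' - l ∉ V) : D.correlation k f g σ l l' = 0 := by
  obtain ⟨P, hP⟩ := D.exists_contribution_mul_conj_eq hf hg σ l l'
  rw [correlation, ← (hk.polynomial_mul P).integral_character_mul_eq_zero (by rwa [neg_sub])]
  refine integral_congr_ae (.of_forall fun ξ => ?_)
  simp only [correlationIntegrand, hP]
  ring

lemma correlation_eq_of_contribution_eq {a a' : ℂ}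
    (h : ∀ ξ, D.contribution f l ξ = a * character ξ l)
    (h' : ∀ ξ, D.contribution g l' ξ = a' * character ξ l') (ψ : 𝓢(ℝ, ℂ)) :
    D.correlation (𝓕 ψ : 𝓢(ℝ, ℂ)) f g σ l l' =
      a * (starRingEnd ℂ) a' * character σ l * ψ (l' - l) := by
  have hψ : ψ (l' - l) = ∫ ξ, character ξ (l - l') * (𝓕 ψ : 𝓢(ℝ, ℂ)) ξ := by
    rw [← fourier_eq_integral_character, fourier_fourier_apply, neg_sub]
  rw [correlation, hψ, ← integral_const_mul]
  refine integral_congr_ae (.of_forall fun ξ => ?_)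
  simp only [correlationIntegrand, h, h', map_mul, character_add_left,
    ← character_mul_conj_character]
  ring

-- The spectra of the two modulated functions are too close to each other for both of them to meet
-- the spectrum of `α`, so one of the two factors vanishes.
lemma apply_mul_conj_apply_eq_zero {δ : ℝ} (hδ : 0 < δ)
    (hS : IsSeparatedBy δ (TDsupport (fourierTD α))) {φ ψ : 𝓢(ℝ, ℂ)} {ξ : ℝ}
    (hφ : HasSpectrumIn ((· - (ξ + δ / 2)) ⁻¹' closedBall 0 (δ / 8)) φ)
    (hψ : HasSpectrumIn ((· - ξ) ⁻¹' closedBall 0 (δ / 8)) ψ) :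
    α φ * (starRingEnd ℂ) (α ψ) = 0 := by
  by_contra! hne
  obtain ⟨s, hs, hsα⟩ := not_disjoint_iff.1 (mt hφ.apply_eq_zero (left_ne_zero_of_mul hne))
  obtain ⟨t, ht, htα⟩ := not_disjoint_iff.1
    (mt hψ.apply_eq_zero ((map_ne_zero _).1 (right_ne_zero_of_mul hne)))
  rw [mem_preimage, mem_closedBall_zero_iff, Real.norm_eq_abs, abs_le] at hs ht
  have hst : s ≠ t := by
    rintro rfl
    linarith
  exact (hS s hsα t htα hst).not_gt (abs_lt.2 ⟨by linarith, by linarith⟩)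

lemma hasSum_correlationIntegrand {δ : ℝ} (hδ : 0 < δ)
    (hS : IsSeparatedBy δ (TDsupport (fourierTD α))) (k : ℝ → ℂ)
    (hf : HasSpectrumIn (closedBall 0 (δ / 8)) f) (hg : HasSpectrumIn (closedBall 0 (δ / 8)) g)
    (ξ : ℝ) :
    HasSum (fun p : TDsupport α × TDsupport α =>
      D.correlationIntegrand k f g (δ / 2) p.1 p.2 ξ) 0 := by
  obtain ⟨Φ, hΦ⟩ := (hf.character_mul (ξ + δ / 2)).exists_coe_eq
  obtain ⟨Ψ, hΨ⟩ := (hg.character_mul ξ).exists_coe_eq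
  have hΦspec := hf.character_mul (ξ + δ / 2)
  have hΨspec := hg.character_mul ξ
  rw [← hΦ] at hΦspec
  rw [← hΨ] at hΨspec
  have hzero := apply_mul_conj_apply_eq_zero hδ hS hΦspec hΨspec
  have hprod := hasSum_mul_conj (D.hasSum_contribution hΦ) (D.hasSum_contribution hΨ)
  rw [hzero] at hprod
  exact (mul_zero (k ξ)) ▸ hprod.mul_left (k ξ)

lemma hasSum_correlation {δ δ' : ℝ} (hδ : 0 < δ) (hΛ : IsSeparatedBy δ (TDsupport α))
    (hδ' : 0 < δ') (hS : IsSeparatedBy δ' (TDsupport (fourierTD α))) {φ ψ : 𝓢(ℝ, ℂ)}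
    (k : 𝓢(ℝ, ℂ)) (hφ : HasSpectrumIn (closedBall 0 (δ' / 8)) φ)
    (hψ : HasSpectrumIn (closedBall 0 (δ' / 8)) ψ) :
    HasSum (fun p : TDsupport α × TDsupport α => D.correlation k φ ψ (δ' / 2) p.1 p.2) 0 := by
  obtain ⟨b, hb₀, hb⟩ := D.exists_norm_contribution_le φ
  obtain ⟨b', hb'₀, hb'⟩ := D.exists_norm_contribution_le ψ
  have : Countable (TDsupport α) := (hΛ.injOn_floor hδ 0).injective.countable
  have hΛsum := hΛ.summable_inv_one_add_abs_sq hδ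
  have hint (p : TDsupport α × TDsupport α) :
      Integrable (D.correlationIntegrand k φ ψ (δ' / 2) p.1 p.2) :=
    ((integrable_one_add_abs_pow_mul_norm k (δ' / 2) D.order).const_mul _).mono'
      (D.continuous_correlationIntegrand k (φ.smooth ⊤) (ψ.smooth ⊤) _ _ _).aestronglyMeasurable
      (.of_forall fun ξ => D.norm_correlationIntegrand_le (hb _ _) (hb' _ _))
  have hsum : Summable fun p : TDsupport α × TDsupport α =>
      ∫ ξ, ‖D.correlationIntegrand k φ ψ (δ' / 2) p.1 p.2 ξ‖ :=
    .of_nonneg_of_le (fun p => integral_nonneg fun ξ => norm_nonneg _)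
      (fun p => D.integral_norm_correlationIntegrand_le k (hb p.1) (hb' p.2))
      (((hΛsum.mul_left b).mul_of_nonneg (hΛsum.mul_left b') (fun l => by positivity)
        fun l => by positivity).mul_right _)
  have h := hasSum_integral_of_summable_integral_norm hint hsum
  simp only [(D.hasSum_correlationIntegrand hδ' hS k hφ hψ _).tsum_eq, integral_zero] at h
  exact h

end DiracExpansion

end Correlation

section ReturnSet

variable {α : TemperedDist} {a a' : ℂ} {b b' c δ δ' ε ρ l₀ l₁ : ℝ}

/-- The points of `Λ` whose translate by `h` is within `ε` of `Λ`, an approximate version of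
`Λ ∩ (Λ - h)`. -/
def returnSet (Λ : Set ℝ) (h ε : ℝ) : Set ℝ :=
  {x ∈ Λ | ∃ y ∈ Λ, |y - x - h| < ε}

lemma returnSet_subset (Λ : Set ℝ) (h ε : ℝ) : returnSet Λ h ε ⊆ Λ :=
  sep_subset _ _

lemma IsSeparatedBy.mem_returnSet_and_ne_of_mem_closedBall {Λ : Set ℝ} (hΛ : IsSeparatedBy δ Λ)
    (hρε : 2 * ρ < ε) (hεδ : ε ≤ δ) (hl₁ : l₁ ∈ Λ) {l l' : ℝ} (hl : l ∈ Λ) (hl' : l' ∈ Λ)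
    (hne : (l, l') ≠ (l₁, l₀)) (hmem : l' - l ∈ closedBall (l₀ - l₁) (2 * ρ)) :
    l' ∈ returnSet Λ (l₁ - l₀) ε ∧ l' ≠ l₀ := by
  rw [mem_closedBall, Real.dist_eq, abs_sub_comm,
    show l₀ - l₁ - (l' - l) = l - l' - (l₁ - l₀) by ring] at hmem
  refine ⟨⟨hl', l, hl, by linarith⟩, ?_⟩
  rintro rfl
  rw [sub_sub_sub_cancel_right] at hmem
  exact (hΛ l hl l₁ hl₁ fun h => hne (by rw [h])).not_gt (by linarith)

-- With the frequency weight `𝓕 (cutoff (l₀ - l₁) ρ)`, only the pairs `(l, l')` with `l - l'` close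
-- to `l₁ - l₀` correlate, so `l'` ranges over a return set.
lemma DiracExpansion.norm_mul_norm_le_of_contribution_eq (D : DiracExpansion α) (hδ : 0 < δ)
    (hΛ : IsSeparatedBy δ (TDsupport α)) (hδ' : 0 < δ')
    (hS : IsSeparatedBy δ' (TDsupport (fourierTD α))) (hl₀ : l₀ ∈ TDsupport α)
    (hl₁ : l₁ ∈ TDsupport α) (hρ : 0 < ρ) (hρε : 2 * ρ < ε) (hεδ : ε ≤ δ) {φ ψ : 𝓢(ℝ, ℂ)}
    (hφ : HasSpectrumIn (closedBall 0 (δ' / 8)) φ) (hψ : HasSpectrumIn (closedBall 0 (δ' / 8)) ψ)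
    (ha : ∀ ξ, D.contribution φ l₁ ξ = a * character ξ l₁)
    (ha' : ∀ ξ, D.contribution ψ l₀ ξ = a' * character ξ l₀) (hb₀ : 0 ≤ b) (hb₀' : 0 ≤ b')
    (hb : ∀ l ξ, ‖D.contribution φ l ξ‖ ≤
      b * ((1 + |l|) ^ 2)⁻¹ * (1 + 2 * Real.pi * |ξ|) ^ D.order)
    (hb' : ∀ l ∈ returnSet (TDsupport α) (l₁ - l₀) ε, l ≠ l₀ → ∀ ξ, ‖D.contribution ψ l ξ‖ ≤
      b' * ((1 + |l|) ^ 2)⁻¹ * (1 + 2 * Real.pi * |ξ|) ^ D.order) :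
    ‖a‖ * ‖a'‖ ≤ b * b' * D.correlationConst (𝓕 (cutoff (l₀ - l₁) hρ) : 𝓢(ℝ, ℂ)) (δ' / 2) *
      ∑' p : TDsupport α × TDsupport α, ((1 + |(p.1 : ℝ)|) ^ 2)⁻¹ * ((1 + |(p.2 : ℝ)|) ^ 2)⁻¹ := by
  set k : 𝓢(ℝ, ℂ) := 𝓕 (cutoff (l₀ - l₁) hρ)
  have hk : HasSpectrumIn (closedBall (l₀ - l₁) (2 * ρ)) k := ⟨_, rfl, tsupport_cutoff_subset hρ⟩
  have hC : 0 ≤ b * b' * D.correlationConst k (δ' / 2) :=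
    mul_nonneg (mul_nonneg hb₀ hb₀') (D.correlationConst_nonneg k _)
  have hsummable := hΛ.summable_inv_one_add_abs_sq hδ
  have hle := norm_le_tsum_of_hasSum_zero (i := (⟨l₁, hl₁⟩, ⟨l₀, hl₀⟩))
    (D.hasSum_correlation hδ hΛ hδ' hS k hφ hψ)
    ((hsummable.mul_of_nonneg hsummable (fun l => by positivity)
      fun l => by positivity).mul_left (b * b' * D.correlationConst k (δ' / 2)))
    (fun p => mul_nonneg hC (by positivity)) fun ⟨⟨l, hl⟩, ⟨l', hl'⟩⟩ hne => ?_
  · rwa [D.correlation_eq_of_contribution_eq ha ha', cutoff_eq_one hρ (by simpa using hρ.le),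
      norm_mul, norm_mul, norm_mul, RCLike.norm_conj, norm_character, norm_one, mul_one, mul_one,
      tsum_mul_left] at hle
  · by_cases hmem : l' - l ∈ closedBall (l₀ - l₁) (2 * ρ)
    · obtain ⟨hret, hne'⟩ := hΛ.mem_returnSet_and_ne_of_mem_closedBall hρε hεδ hl₁ hl hl'
        (by simpa [Prod.ext_iff, Subtype.ext_iff] using hne) hmem
      exact (D.norm_correlation_le k (hb l) (hb' l' hret hne')).trans_eq (by ring)
    · rw [D.correlation_eq_zero hk (φ.smooth ⊤) (ψ.smooth ⊤) hmem, norm_zero]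
      exact mul_nonneg hC (by positivity)

theorem exists_lt_ncard_returnSet_inter_Icc (hδ : 0 < δ) (hΛ : IsSeparatedBy δ (TDsupport α))
    (hδ' : 0 < δ') (hS : IsSeparatedBy δ' (TDsupport (fourierTD α))) :
    ∃ c > 0, ∀ l₀ ∈ TDsupport α, ∀ l₁ ∈ TDsupport α, ∀ ε > 0, ε ≤ δ → ∀ᶠ r in atTop,
      c * r < (returnSet (TDsupport α) (l₁ - l₀) ε ∩ Icc (l₀ - r) (l₀ + r)).ncard := by
  obtain ⟨D⟩ := nonempty_diracExpansion hδ hΛ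
  obtain ⟨κ, hκ, hisolate⟩ := D.exists_isolating_function
  have hη : 0 < δ' / 8 := by positivity
  obtain ⟨c, hc, hcδ, hcκ⟩ : ∃ c > 0, c ≤ 3 / δ ∧ c ≤ κ * δ * (δ' / 8) ^ 2 :=
    ⟨min (3 / δ) (κ * δ * (δ' / 8) ^ 2), by positivity, min_le_left _ _, min_le_right _ _⟩
  refine ⟨c, hc, fun l₀ hl₀ l₁ hl₁ ε hε hεδ => ?_⟩
  have hisolate := hisolate δ hδ (δ' / 8) hη c hc hcδ hcκ
  obtain ⟨a, ha, _, _, hr₁⟩ := hisolate l₁ hl₁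
  obtain ⟨r₁, hr₁, hr₁₀⟩ := (hr₁.and (eventually_ge_atTop 0)).exists
  obtain ⟨φ, hφ, hφa, -⟩ := hr₁ ∅ (by simp [IsSeparatedBy]) (by simpa using by positivity)
  obtain ⟨b, hb₀, hb⟩ := D.exists_norm_contribution_le φ
  obtain ⟨a', ha', K, hK, hr⟩ := hisolate l₀ hl₀
  have hε4 : 0 < ε / 4 := by positivity
  set T := ∑' p : TDsupport α × TDsupport α,
    ((1 + |(p.1 : ℝ)|) ^ 2)⁻¹ * ((1 + |(p.2 : ℝ)|) ^ 2)⁻¹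
  set W := D.correlationConst (𝓕 (cutoff (l₀ - l₁) hε4) : 𝓢(ℝ, ℂ)) (δ' / 2)
  have hlim : Tendsto (fun r : ℝ => b * K * W * T * r⁻¹) atTop (𝓝 0) := by
    simpa using tendsto_inv_atTop_zero.const_mul (b * K * W * T)
  filter_upwards [hr, hlim.eventually_lt_const (mul_pos (norm_pos_iff.2 ha) (norm_pos_iff.2 ha')),
    eventually_ge_atTop 0] with r hr hrlt hr₀
  by_contra! hcard
  obtain ⟨ψ, hψ, hψa, hψb⟩ := hr _
    (hΛ.mono (insert_subset hl₀ (returnSet_subset _ _ _))) hcard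
  have hle := D.norm_mul_norm_le_of_contribution_eq hδ hΛ hδ' hS hl₀ hl₁ hε4 (by linarith) hεδ hφ hψ
    hφa hψa hb₀ (mul_nonneg hK (inv_nonneg.2 hr₀)) hb fun l hl hne => hψb l hne (.inl hl)
  refine hrlt.not_ge (hle.trans_eq ?_)
  ring

end ReturnSet

section DifferenceSet

variable {Λ : Set ℝ} {A B a b c δ ε h r : ℝ}

/-- `HasDenseReturns c Λ`: for each difference `h` of two points of `Λ` and every `ε > 0`, the
return set `returnSet Λ h ε` has at least `c * r` points in `[-r, r]` for large `r`. -/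
def HasDenseReturns (c : ℝ) (Λ : Set ℝ) : Prop :=
  ∀ h ∈ Λ - Λ, ∀ ε > 0, ∀ᶠ r in atTop, c * r ≤ (returnSet Λ h ε ∩ Icc (-r) r).ncard

/-- `HasLinearGrowth A B D`: every interval `[a, b]` contains at most `A * (b - a) + B` points
of `D`. Finiteness is required separately because `Set.ncard` vanishes on infinite sets. -/
def HasLinearGrowth (A B : ℝ) (D : Set ℝ) : Prop :=
  ∀ ⦃a b⦄, a ≤ b → (D ∩ Icc a b).Finite ∧ ((D ∩ Icc a b).ncard : ℝ) ≤ A * (b - a) + B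

lemma returnSet_mono (Λ : Set ℝ) (h : ℝ) {ε ε' : ℝ} (hε : ε ≤ ε') :
    returnSet Λ h ε ⊆ returnSet Λ h ε' :=
  fun _ ⟨hx, y, hy, hlt⟩ => ⟨hx, y, hy, hlt.trans_le hε⟩

lemma IsSeparatedBy.finite_returnSet_inter_Icc (hΛ : IsSeparatedBy δ Λ) (hδ : 0 < δ)
    (h ε a b : ℝ) : (returnSet Λ h ε ∩ Icc a b).Finite :=
  (hΛ.finite_inter_Icc hδ a b).subset (inter_subset_inter_left _ (returnSet_subset Λ h ε))

lemma IsSeparatedBy.hasDenseReturns (hΛ : IsSeparatedBy δ Λ) (hδ : 0 < δ) (hc : 0 < c)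
    (hret : ∀ l₀ ∈ Λ, ∀ l₁ ∈ Λ, ∀ ε > 0, ε ≤ δ → ∀ᶠ r in atTop,
      c * r < (returnSet Λ (l₁ - l₀) ε ∩ Icc (l₀ - r) (l₀ + r)).ncard) :
    HasDenseReturns (c / 2) Λ := by
  rintro _ ⟨l₁, hl₁, l₀, hl₀, rfl⟩ ε hε
  have hshift : Tendsto (fun r : ℝ => r - |l₀|) atTop atTop :=
    tendsto_atTop_add_const_right _ _ tendsto_id
  filter_upwards [hshift.eventually
    (hret l₀ hl₀ l₁ hl₁ (min ε δ) (lt_min hε hδ) (min_le_right _ _)),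
    eventually_ge_atTop (2 * |l₀|)] with r hcount hr
  have hsub : returnSet Λ (l₁ - l₀) (min ε δ) ∩ Icc (l₀ - (r - |l₀|)) (l₀ + (r - |l₀|)) ⊆
      returnSet Λ (l₁ - l₀) ε ∩ Icc (-r) r :=
    inter_subset_inter (returnSet_mono Λ _ (min_le_left _ _))
      (Icc_subset_Icc (by linarith [neg_abs_le l₀]) (by linarith [le_abs_self l₀]))
  calc c / 2 * r ≤ c * (r - |l₀|) := by nlinarith
    _ ≤ _ := hcount.le
    _ ≤ _ := Nat.cast_le.2 (ncard_le_ncard hsub (hΛ.finite_returnSet_inter_Icc hδ _ _ _ _))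

lemma exists_isSeparatedBy_of_finite {s : Set ℝ} (hs : s.Finite) :
    ∃ ε > 0, IsSeparatedBy ε s := by
  rcases s.subsingleton_or_nontrivial with hsub | hnon
  · exact ⟨1, one_pos, fun x hx y hy hne => (hne (hsub hx hy)).elim⟩
  · exact ⟨s.infsep, hs.infsep_pos_iff_nontrivial.2 hnon,
      fun x hx y hy hne => infsep_le_dist_of_mem hx hy hne⟩

-- The points `y ∈ Λ` with `|y - x - h| < ε` are distinct for distinct `h ∈ T`.
lemma IsSeparatedBy.card_filter_mem_returnSet_le (hΛ : IsSeparatedBy δ Λ) (hδ : 0 < δ)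
    (hε : 0 < ε) (hεδ : ε ≤ δ) (hab : a ≤ b) {T : Finset ℝ} (hT : (T : Set ℝ) ⊆ Icc a b)
    (hTsep : IsSeparatedBy (2 * ε) (T : Set ℝ)) (x : ℝ)
    [DecidablePred fun h => x ∈ returnSet Λ h ε] :
    ((T.filter fun h => x ∈ returnSet Λ h ε).card : ℝ) ≤ (b - a) / δ + 3 := by
  have hnear : ∀ h ∈ T.filter fun h => x ∈ returnSet Λ h ε, ∃ y ∈ Λ, |y - x - h| < ε :=
    fun h hh => (Finset.mem_filter.1 hh).2.2
  choose! y hyΛ hy using hnear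
  have hcard : (T.filter fun h => x ∈ returnSet Λ h ε).card ≤
      (Λ ∩ Icc (x + a - ε) (x + b + ε)).ncard := by
    rw [← ncard_coe_finset]
    refine ncard_le_ncard_of_injOn y (fun h hh => ?_) (fun h hh h' hh' heq => ?_)
      (hΛ.finite_inter_Icc hδ _ _)
    · have hhT := hT (Finset.mem_filter.1 hh).1
      have := abs_lt.1 (hy h hh)
      exact ⟨hyΛ h hh, by linarith [hhT.1], by linarith [hhT.2]⟩
    · by_contra hne
      refine (hTsep h (Finset.mem_filter.1 hh).1 h' (Finset.mem_filter.1 hh').1 hne).not_gt ?_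
      have := abs_lt.1 (hy h hh)
      have := abs_lt.1 (hy h' hh')
      exact abs_lt.2 ⟨by linarith, by linarith⟩
  calc ((T.filter fun h => x ∈ returnSet Λ h ε).card : ℝ)
      ≤ (x + b + ε - (x + a - ε)) / δ + 1 :=
        (Nat.cast_le.2 hcard).trans (hΛ.ncard_inter_Icc_le hδ (by linarith))
    _ = (b - a) / δ + 2 * (ε / δ) + 1 := by ring
    _ ≤ (b - a) / δ + 3 := by linarith [(div_le_one hδ).2 hεδ]

lemma card_le_of_subset_sub_inter_Icc (hΛ : IsSeparatedBy δ Λ) (hδ : 0 < δ) (hc : 0 < c)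
    (hret : HasDenseReturns c Λ) (hab : a ≤ b) {T : Finset ℝ}
    (hT : (T : Set ℝ) ⊆ (Λ - Λ) ∩ Icc a b) :
    (T.card : ℝ) ≤ (2 / δ + 1) / c * ((b - a) / δ + 3) := by
  classical
  obtain ⟨ε₀, hε₀, hTsep⟩ := exists_isSeparatedBy_of_finite T.finite_toSet
  set ε := min (ε₀ / 2) δ
  have hε : 0 < ε := lt_min (half_pos hε₀) hδ
  have hε₀' : 2 * ε ≤ ε₀ := by linarith [min_le_left (ε₀ / 2) δ]
  obtain ⟨r, hr, hcount⟩ := ((eventually_ge_atTop (1 : ℝ)).and <|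
    (eventually_all_finset T).2 fun h hh => hret h (hT hh).1 ε hε).exists
  set X := (hΛ.finite_inter_Icc hδ (-r) r).toFinset
  have hX : (X.card : ℝ) ≤ (2 / δ + 1) * r := by
    rw [← ncard_eq_toFinset_card _ (hΛ.finite_inter_Icc hδ _ _)]
    calc ((Λ ∩ Icc (-r) r).ncard : ℝ) ≤ (r - -r) / δ + 1 :=
          hΛ.ncard_inter_Icc_le hδ (by linarith)
      _ ≤ (r - -r) / δ + r := by linarith
      _ = (2 / δ + 1) * r := by ring
  have hfiber (h : ℝ) : ((X.bipartiteAbove (fun h x => x ∈ returnSet Λ h ε) h : Finset ℝ) : Set ℝ) =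
      returnSet Λ h ε ∩ Icc (-r) r := by
    ext x
    simpa [X, Finset.bipartiteAbove] using
      ⟨fun hx => ⟨hx.2, hx.1.2⟩, fun hx => ⟨⟨returnSet_subset Λ h ε hx.1, hx.2⟩, hx.1⟩⟩
  have hdouble : T.card • (c * r) ≤ X.card • ((b - a) / δ + 3) :=
    Finset.card_nsmul_le_card_nsmul (fun h x => x ∈ returnSet Λ h ε)
      (fun h hh => by rw [← ncard_coe_finset, hfiber]; exact hcount h hh)
      fun x _ => hΛ.card_filter_mem_returnSet_le hδ hε (min_le_right _ _) hab
        (hT.trans inter_subset_right)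
        (fun x hx y hy hne => hε₀'.trans (hTsep x hx y hy hne)) x
  have : 0 ≤ (b - a) / δ + 3 := by have := div_nonneg (sub_nonneg.2 hab) hδ.le; linarith
  rw [nsmul_eq_mul, nsmul_eq_mul] at hdouble
  refine le_of_mul_le_mul_right ?_ (mul_pos hc (one_pos.trans_le hr))
  calc T.card * (c * r) ≤ (2 / δ + 1) * r * ((b - a) / δ + 3) :=
        hdouble.trans (mul_le_mul_of_nonneg_right hX this)
    _ = _ := by field_simp

lemma finite_and_ncard_le_of_forall_finset {α : Type*} {s : Set α} {N : ℝ}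
    (h : ∀ T : Finset α, (T : Set α) ⊆ s → (T.card : ℝ) ≤ N) : s.Finite ∧ (s.ncard : ℝ) ≤ N := by
  have hs : s.Finite := by
    by_contra hinf
    obtain ⟨n, hn⟩ := exists_nat_gt N
    obtain ⟨T, hT, rfl⟩ := Set.Infinite.exists_subset_card_eq hinf n
    exact (h T hT).not_gt hn
  refine ⟨hs, ?_⟩
  rw [ncard_eq_toFinset_card _ hs]
  exact h _ (by simp)

lemma exists_hasLinearGrowth_sub (hΛ : IsSeparatedBy δ Λ) (hδ : 0 < δ) (hc : 0 < c)
    (hret : HasDenseReturns c Λ) : ∃ A ≥ 0, ∃ B, HasLinearGrowth A B (Λ - Λ) :=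
  ⟨(2 / δ + 1) / c / δ, by positivity, (2 / δ + 1) / c * 3, fun a b hab =>
    finite_and_ncard_le_of_forall_finset fun _ hT =>
      (card_le_of_subset_sub_inter_Icc hΛ hδ hc hret hab hT).trans_eq (by ring)⟩

-- Near `h` the difference set is finite, so for small `ε` no difference other than `h` is
-- `ε`-close to `h`.
lemma HasLinearGrowth.eventually_le_ncard (hD : HasLinearGrowth A B (Λ - Λ))
    (hret : HasDenseReturns c Λ) (hh : h ∈ Λ - Λ) :
    ∀ᶠ r in atTop, c * r ≤ ({x ∈ Λ | x + h ∈ Λ} ∩ Icc (-r) r).ncard := by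
  obtain ⟨ε, hε, hsep⟩ := exists_isSeparatedBy_of_finite
    (hD (show h - 1 ≤ h + 1 by linarith)).1
  have hreturn : returnSet Λ h (min ε 1) = {x ∈ Λ | x + h ∈ Λ} := by
    refine Subset.antisymm (fun x ⟨hx, y, hy, hlt⟩ => ⟨hx, ?_⟩) fun x ⟨hx, hxh⟩ =>
      ⟨hx, x + h, hxh, by simpa using hε⟩
    obtain ⟨hltε, hlt1⟩ := lt_min_iff.1 hlt
    have heq : y - x = h := by
      by_contra hne
      have := abs_lt.1 hlt1
      exact (hsep (y - x) ⟨sub_mem_sub hy hx, by linarith, by linarith⟩ h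
        ⟨hh, by linarith, by linarith⟩ hne).not_gt hltε
    rwa [← heq, add_sub_cancel]
  exact hreturn ▸ hret h hh (min ε 1) (lt_min hε one_pos)

end DifferenceSet

section QuasiAdditive

-- Jumping from the last visit to `u 0` removes one available point at the cost of one step.
lemma dist_le_mul_card_of_forall_mem {X : Type*} [PseudoMetricSpace X] {C : ℝ} (hC : 0 ≤ C)
    (V : Finset X) {u : ℕ → X} {k : ℕ} (hu : ∀ j ≤ k, u j ∈ V)
    (hstep : ∀ j < k, dist (u j) (u (j + 1)) ≤ C) : dist (u 0) (u k) ≤ C * V.card := by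
  classical
  induction hn : V.card generalizing V u k with
  | zero => exact absurd (hu 0 k.zero_le) (by simp [Finset.card_eq_zero.1 hn])
  | succ n ih =>
    set j := Nat.findGreatest (fun i => u i = u 0) k
    have hj : u j = u 0 := Nat.findGreatest_spec (P := fun i => u i = u 0) k.zero_le rfl
    rcases (Nat.findGreatest_le k : j ≤ k).eq_or_lt with (hjk : j = k) | (hjk : j < k)
    · rw [← hj, hjk, dist_self]
      positivity
    · have hV : ∀ i ≤ k - (j + 1), u (j + 1 + i) ∈ V.erase (u 0) := fun i hi =>
        Finset.mem_erase.2 ⟨Nat.findGreatest_is_greatest (P := fun i => u i = u 0)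
          (by omega : j < j + 1 + i) (by omega), hu _ (by omega)⟩
      have htail := ih (V.erase (u 0)) (u := fun i => u (j + 1 + i)) hV
        (fun i hi => hstep (j + 1 + i) (by omega))
        (by rw [Finset.card_erase_of_mem (hu 0 k.zero_le), hn, Nat.add_sub_cancel])
      rw [add_zero, Nat.add_sub_cancel' hjk] at htail
      calc dist (u 0) (u k) ≤ dist (u j) (u (j + 1)) + dist (u (j + 1)) (u k) :=
            hj ▸ dist_triangle _ _ _
        _ ≤ C + C * n := add_le_add (hstep j hjk) htail
        _ = C * (n + 1 : ℕ) := by push_cast; ring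

lemma exists_tendsto_div_of_abs_sub_le {a : ℕ → ℝ} {C : ℝ}
    (ha : ∀ m n, |a (m + n) - a m - a n| ≤ C) :
    ∃ l, Tendsto (fun n => a n / n) atTop (𝓝 l) ∧ ∀ n : ℕ, l * n ≤ a n + C := by
  have hsub : Subadditive fun n => a n + C := fun m n => by
    linarith [(abs_le.1 (ha m n)).2]
  have hlow : ∀ n : ℕ, n * (a 1 - C) ≤ a n + C := by
    intro n
    induction n with
    | zero => have := (abs_le.1 (ha 0 0)).2; norm_num at this ⊢; linarith
    | succ n ih => push_cast; linarith [(abs_le.1 (ha n 1)).1]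
  have hbdd : BddBelow (range fun n : ℕ => (a n + C) / n) := by
    refine ⟨min (a 1 - C) 0, forall_mem_range.2 fun n => ?_⟩
    rcases n.eq_zero_or_pos with rfl | hn
    · simp
    · exact (min_le_left _ _).trans <|
        (le_div_iff₀ (Nat.cast_pos.2 hn)).2 ((mul_comm _ _).trans_le (hlow n))
  refine ⟨hsub.lim, ?_, fun n => ?_⟩
  · simpa [add_div] using
      (hsub.tendsto_lim hbdd).sub (tendsto_const_div_atTop_nhds_zero_nat C)
  · rcases n.eq_zero_or_pos with rfl | hn
    · simpa using hlow 0
    · exact (le_div_iff₀ (Nat.cast_pos.2 hn)).1 (hsub.lim_le_div hbdd hn.ne')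

lemma exists_forall_nat_abs_sub_mul_le {a : ℕ → ℝ} {C : ℝ}
    (ha : ∀ m n, |a (m + n) - a m - a n| ≤ C) : ∃ l : ℝ, ∀ n : ℕ, |a n - l * n| ≤ C := by
  obtain ⟨l, hl, hle⟩ := exists_tendsto_div_of_abs_sub_le ha
  obtain ⟨l', hl', hle'⟩ := exists_tendsto_div_of_abs_sub_le (a := -a) (C := C) fun m n => by
    rw [← abs_neg]
    convert ha m n using 2
    simp only [Pi.neg_apply]
    ring
  have hneg : l' = -l := tendsto_nhds_unique hl' (by simpa [neg_div] using hl.neg)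
  refine ⟨l, fun n => abs_le.2 ⟨by linarith [hle n], ?_⟩⟩
  have := hle' n
  rw [hneg, Pi.neg_apply] at this
  linarith

lemma exists_forall_int_abs_sub_mul_le {a : ℤ → ℝ} {C : ℝ}
    (ha : ∀ m n, |a (m + n) - a m - a n| ≤ C) : ∃ l : ℝ, ∀ n : ℤ, |a n - l * n| ≤ 3 * C := by
  obtain ⟨l, hl⟩ := exists_forall_nat_abs_sub_mul_le (a := fun n : ℕ => a n) (C := C)
    fun m n => by exact_mod_cast ha m n
  have hC : 0 ≤ C := (abs_nonneg _).trans (ha 0 0)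
  refine ⟨l, fun n => ?_⟩
  obtain ⟨m, rfl | rfl⟩ := n.eq_nat_or_neg
  · exact (hl m).trans (by linarith)
  · have hm := abs_le.1 (hl m)
    have hzero := abs_le.1 (hl 0)
    have hadd := abs_le.1 (ha m (-m))
    rw [add_neg_cancel] at hadd
    push_cast at hzero ⊢
    exact abs_le.2 ⟨by linarith, by linarith⟩

end QuasiAdditive

section AlmostLinear

variable {Λ : Set ℝ} {A B C R : ℝ} {f : ℝ →+ ℝ} {p : ℤ → ℝ}

-- As `t` grows, `p (i + t + m) - p (i + t)` moves among the boundedly many differences near `m`,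
-- and its image under `f` changes in bounded steps.
lemma HasLinearGrowth.abs_map_sub_le (hD : HasLinearGrowth A B (Λ - Λ)) (hR : 0 ≤ R)
    (hC : 0 ≤ C) (hpΛ : ∀ n, p n ∈ Λ) (hp : ∀ n, |p n - n| ≤ R)
    (hstep : ∀ n, |f (p (n + 1) - p n)| ≤ C) (m i j : ℤ) :
    |f (p (j + m) - p j) - f (p (i + m) - p i)| ≤ 2 * C * (A * (4 * R) + B) := by
  classical
  wlog hij : i ≤ j generalizing i j
  · rw [abs_sub_comm]
    exact this j i (le_of_not_ge hij)
  obtain ⟨k, rfl⟩ := Int.le.dest hij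
  obtain ⟨hfin, hcard⟩ := hD (show (m - 2 * R : ℝ) ≤ m + 2 * R by linarith)
  set V := hfin.toFinset.image f
  have hV : (V.card : ℝ) ≤ A * (4 * R) + B := by
    calc (V.card : ℝ) ≤ ((Λ - Λ) ∩ Icc (m - 2 * R) (m + 2 * R)).ncard := by
          rw [ncard_eq_toFinset_card _ hfin]; exact Nat.cast_le.2 Finset.card_image_le
      _ ≤ _ := hcard
      _ = _ := by ring
  have hmem : ∀ t ≤ k, f (p (i + t + m) - p (i + t)) ∈ V := fun t _ => by
    have h₁ := abs_le.1 (hp (i + t + m))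
    have h₂ := abs_le.1 (hp (i + t))
    push_cast at h₁ h₂
    exact Finset.mem_image_of_mem _ (hfin.mem_toFinset.2
      ⟨sub_mem_sub (hpΛ _) (hpΛ _), by linarith, by linarith⟩)
  have hdist : ∀ t < k, dist (f (p (i + t + m) - p (i + t)))
      (f (p (i + (t + 1 : ℕ) + m) - p (i + (t + 1 : ℕ)))) ≤ 2 * C := fun t _ => by
    have h₁ := hstep (i + t + m)
    have h₂ := hstep (i + t)
    rw [show i + (t + 1 : ℕ) + m = i + t + m + 1 by push_cast; ring,
      show i + (t + 1 : ℕ) = i + t + 1 by push_cast; ring, dist_comm, Real.dist_eq]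
    simp only [map_sub] at h₁ h₂ ⊢
    rw [abs_le] at h₁ h₂ ⊢
    exact ⟨by linarith, by linarith⟩
  have hwalk := dist_le_mul_card_of_forall_mem (by positivity) V hmem hdist
  rw [dist_comm, Real.dist_eq, Nat.cast_zero, add_zero] at hwalk
  exact hwalk.trans (mul_le_mul_of_nonneg_left hV (by positivity))

lemma HasLinearGrowth.exists_abs_map_le (hD : HasLinearGrowth A B (Λ - Λ)) (hR : 0 ≤ R)
    (f : ℝ → ℝ) : ∃ C ≥ 0, ∀ x ∈ Λ, ∀ y ∈ Λ, |y - x| ≤ R → |f (y - x)| ≤ C := by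
  obtain ⟨C, hC⟩ := ((hD (show -R ≤ R by linarith)).1.image fun d => |f d|).bddAbove
  exact ⟨max C 0, le_max_right _ _, fun x hx y hy hxy =>
    (hC ⟨y - x, ⟨sub_mem_sub hy hx, abs_le.1 hxy⟩, rfl⟩).trans (le_max_left _ _)⟩

theorem HasLinearGrowth.exists_abs_map_sub_mul_le (hD : HasLinearGrowth A B (Λ - Λ))
    (hdense : ∀ x : ℝ, ∃ l ∈ Λ, |l - x| ≤ R) (f : ℝ →+ ℝ) :
    ∃ l C : ℝ, ∀ d ∈ Λ - Λ, |f d - l * d| ≤ C := by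
  have hR : 0 ≤ R := let ⟨_, _, h⟩ := hdense 0; (abs_nonneg _).trans h
  choose p hpΛ hp using fun n : ℤ => hdense n
  obtain ⟨C, hC0, hC⟩ := hD.exists_abs_map_le (show 0 ≤ 2 * R + 1 by linarith) f
  have hstep : ∀ n, |f (p (n + 1) - p n)| ≤ C := fun n => hC _ (hpΛ n) _ (hpΛ (n + 1)) <| by
    have h₁ := abs_le.1 (hp n)
    have h₂ := abs_le.1 (hp (n + 1))
    push_cast at h₂
    exact abs_le.2 ⟨by linarith, by linarith⟩
  obtain ⟨l, hl⟩ := exists_forall_int_abs_sub_mul_le (a := fun n => f (p n - p 0))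
    fun m n => by
      convert hD.abs_map_sub_le hR hC0 hpΛ hp hstep n 0 m using 2
      simp only [map_sub, zero_add]
      ring
  have hfloor : ∀ x ∈ Λ, |f (x - p ⌊x⌋)| ≤ C := fun x hx => hC _ (hpΛ _) x hx <| by
    have := abs_le.1 (hp ⌊x⌋)
    exact abs_le.2 ⟨by linarith [Int.floor_le x], by linarith [Int.lt_floor_add_one x]⟩
  have hlinear : ∀ x ∈ Λ, |f (x - p 0) - l * x| ≤
      C + 3 * (2 * C * (A * (4 * R) + B)) + |l| := fun x hx => by
    have hfract : |l * (⌊x⌋ - x)| ≤ |l| := by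
      rw [abs_mul]
      refine mul_le_of_le_one_right (abs_nonneg l) (abs_le.2 ⟨?_, ?_⟩)
      · linarith [Int.lt_floor_add_one x]
      · linarith [Int.floor_le x]
    calc |f (x - p 0) - l * x| = |f (x - p ⌊x⌋) + (f (p ⌊x⌋ - p 0) - l * ⌊x⌋) + l * (⌊x⌋ - x)| := by
          simp only [map_sub]; ring_nf
      _ ≤ _ := (abs_add_three _ _ _).trans (add_le_add_three (hfloor x hx) (hl _) hfract)
  refine ⟨l, 2 * (C + 3 * (2 * C * (A * (4 * R) + B)) + |l|), ?_⟩
  rintro _ ⟨y, hy, x, hx, rfl⟩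
  calc |f (y - x) - l * (y - x)| = |f (y - p 0) - l * y - (f (x - p 0) - l * x)| := by
        simp only [map_sub]; ring_nf
    _ ≤ _ := (abs_sub _ _).trans (add_le_add (hlinear y hy) (hlinear x hx))
    _ = _ := (two_mul _).symm

end AlmostLinear

section Coordinates

variable {Λ : Set ℝ} {A B R : ℝ}

lemma fg_closure_sub (hdense : ∀ x : ℝ, ∃ l ∈ Λ, |l - x| ≤ R)
    (hD : HasLinearGrowth A B (Λ - Λ)) : (AddSubgroup.closure (Λ - Λ)).FG := by
  have hR : 0 ≤ R := let ⟨_, _, h⟩ := hdense 0; (abs_nonneg _).trans h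
  have hfin := (hD (show -(2 * R + 1) ≤ 2 * R + 1 by linarith)).1
  refine ⟨hfin.toFinset, ?_⟩
  rw [hfin.coe_toFinset]
  set G := AddSubgroup.closure ((Λ - Λ) ∩ Icc (-(2 * R + 1)) (2 * R + 1))
  have hchain : ∀ n : ℕ, ∀ x ∈ Λ, ∀ y ∈ Λ, x ≤ y → y - x ≤ n + 1 → y - x ∈ G := by
    intro n
    induction n with
    | zero =>
      intro x hx y hy hxy hyx
      rw [Nat.cast_zero, zero_add] at hyx
      exact AddSubgroup.subset_closure ⟨sub_mem_sub hy hx, by linarith, by linarith⟩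
    | succ n ih =>
      intro x hx y hy hxy hyx
      rcases le_or_gt (y - x) (2 * R + 1) with hle | hlt
      · exact AddSubgroup.subset_closure ⟨sub_mem_sub hy hx, by linarith, hle⟩
      · obtain ⟨z, hz, hzx⟩ := hdense (x + (R + 1))
        rw [abs_le] at hzx
        rw [← sub_add_sub_cancel y z x]
        push_cast at hyx
        exact G.add_mem (ih z hz y hy (by linarith) (by linarith))
          (AddSubgroup.subset_closure ⟨sub_mem_sub hz hx, by linarith, by linarith⟩)
  refine le_antisymm (AddSubgroup.closure_mono inter_subset_left)
    ((AddSubgroup.closure_le _).2 ?_)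
  rintro _ ⟨y, hy, x, hx, rfl⟩
  obtain ⟨n, hn⟩ := exists_nat_ge |y - x|
  rw [abs_le] at hn
  rcases le_total x y with hxy | hxy
  · exact hchain n x hx y hy hxy (by linarith)
  · exact (G.neg_mem_iff).1 (by simpa using hchain n y hy x hx hxy (by linarith))

-- If all coordinates on a ℤ-basis of `G` were bounded on `D`, then so would be `D` itself.
lemma exists_addMonoidHom_int_of_fg {G : AddSubgroup ℝ} (hG : G.FG) {D : Set ℝ}
    (hDG : D ⊆ G) (hD : ¬ Bornology.IsBounded D) :
    ∃ f : ℝ →+ ℝ, (∀ x ∈ G, f x ∈ range ((↑) : ℤ → ℝ)) ∧ ¬ Bornology.IsBounded (f '' D) := by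
  have : Module.Finite ℤ G :=
    Module.Finite.iff_addGroup_fg.2 ((AddGroup.fg_iff_addSubgroup_fg G).2 hG)
  let b := Module.finBasis ℤ G
  have hext : ∀ i, ∃ f : ℝ →+ ℝ, ∀ x : G, f x = b.repr x i := fun i => by
    obtain ⟨f, hf⟩ := (Module.Baer.of_divisible ℝ).extension_property_addMonoidHom
      G.subtype G.subtype_injective ((Int.castAddHom ℝ).comp (b.coord i).toAddMonoidHom)
    exact ⟨f, fun x => DFunLike.congr_fun hf x⟩
  choose f hf using hext
  suffices hunbdd : ∃ i, ¬ Bornology.IsBounded (f i '' D) by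
    obtain ⟨i, hi⟩ := hunbdd
    exact ⟨f i, fun x hx => ⟨b.repr ⟨x, hx⟩ i, (hf i ⟨x, hx⟩).symm⟩, hi⟩
  by_contra! hbdd
  choose C hC using fun i => isBounded_iff_forall_norm_le.1 (hbdd i)
  refine hD (isBounded_iff_forall_norm_le.2 ⟨∑ i, C i * ‖(b i : ℝ)‖, fun d hd => ?_⟩)
  have hsum : d = ∑ i, f i d * b i := by
    have := congrArg ((↑) : G → ℝ) (b.sum_repr ⟨d, hDG hd⟩)
    rw [AddSubgroup.val_finsetSum] at this
    simpa [← hf, zsmul_eq_mul] using this.symm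
  calc ‖d‖ = ‖∑ i, f i d * b i‖ := by rw [← hsum]
    _ ≤ ∑ i, ‖f i d * b i‖ := norm_sum_le _ _
    _ ≤ _ := Finset.sum_le_sum fun i _ => by
      rw [norm_mul]
      exact mul_le_mul_of_nonneg_right (hC i _ (mem_image_of_mem _ hd)) (norm_nonneg _)

lemma not_isBounded_sub_of_dense (hdense : ∀ x : ℝ, ∃ l ∈ Λ, |l - x| ≤ R) :
    ¬ Bornology.IsBounded (Λ - Λ) := fun hbdd => by
  obtain ⟨C, hC⟩ := isBounded_iff_forall_norm_le.1 hbdd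
  obtain ⟨x, hx, -⟩ := hdense 0
  obtain ⟨y, hy, hyx⟩ := hdense (x + C + R + 1)
  have hdiff := hC _ (sub_mem_sub hy hx)
  rw [Real.norm_eq_abs] at hdiff
  linarith [(abs_le.1 hyx).1, le_abs_self (y - x)]

end Coordinates

section Lattice

variable {Λ : Set ℝ} {A B R c δ ε : ℝ} {f : ℝ →+ ℝ}

-- If `f h` is nearly maximal on `Λ - Λ`, then `f (x + h - x') ≤ sup f` forces `f x ≤ f x' + ε`.
lemma exists_forall_abs_sub_lt {E : Type*} [AddCommGroup E] {Λ : Set E} {f : E →+ ℝ}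
    (hΛ : Λ.Nonempty) (hf : BddAbove (f '' (Λ - Λ))) (hε : 0 < ε) :
    ∃ h ∈ Λ - Λ, ∀ x ∈ {x ∈ Λ | x + h ∈ Λ}, ∀ x' ∈ {x ∈ Λ | x + h ∈ Λ}, |f x - f x'| < ε := by
  obtain ⟨_, ⟨h, hh, rfl⟩, hlt⟩ :=
    exists_lt_of_lt_csSup ((hΛ.sub hΛ).image f) (sub_lt_self (sSup (f '' (Λ - Λ))) hε)
  have hle : ∀ x ∈ Λ, x + h ∈ Λ → ∀ x' ∈ Λ, f x - f x' < ε := fun x _ hxh x' hx' => by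
    have := le_csSup hf (mem_image_of_mem f (sub_mem_sub hxh hx'))
    rw [map_sub, map_add] at this
    linarith
  exact ⟨h, hh, fun x hx x' hx' => abs_sub_lt_iff.2
    ⟨hle x hx.1 hx.2 x' hx'.1, hle x' hx'.1 hx'.2 x hx.1⟩⟩

lemma HasLinearGrowth.card_mul_card_le (hD : HasLinearGrowth A B (Λ - Λ)) {a b : ℝ} (hab : a ≤ b)
    {T P : Finset ℝ} (hT : (T : Set ℝ) ⊆ Λ) (hP : (P : Set ℝ) ⊆ Λ)
    (hTP : ∀ t ∈ T, ∀ x ∈ P, t - x ∈ Icc a b)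
    (hTsep : ∀ t ∈ T, ∀ t' ∈ T, t ≠ t' → ε ≤ |f t - f t'|)
    (hPclose : ∀ x ∈ P, ∀ x' ∈ P, |f x - f x'| < ε) :
    (T.card : ℝ) * P.card ≤ A * (b - a) + B := by
  have hcard : (T ×ˢ P).card ≤ ((Λ - Λ) ∩ Icc a b).ncard := by
    rw [← ncard_coe_finset]
    refine ncard_le_ncard_of_injOn (fun q => q.1 - q.2) ?_ ?_ (hD hab).1
    · rintro ⟨t, x⟩ hq
      obtain ⟨ht, hx⟩ := Finset.mem_product.1 hq
      exact ⟨sub_mem_sub (hT ht) (hP hx), hTP t ht x hx⟩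
    · rintro ⟨t, x⟩ hq ⟨t', x'⟩ hq' (heq : t - x = t' - x')
      obtain ⟨ht, hx⟩ := Finset.mem_product.1 hq
      obtain ⟨ht', hx'⟩ := Finset.mem_product.1 hq'
      have hsub : f t - f t' = f x - f x' := by
        rw [← map_sub, ← map_sub, show t - t' = x - x' by linarith]
      obtain rfl : t = t' := by
        by_contra hne
        exact (hTsep t ht t' ht' hne).not_gt (hsub ▸ hPclose x hx x' hx')
      rw [sub_right_inj.1 heq]
  rw [Finset.card_product] at hcard
  exact_mod_cast (Nat.cast_le (α := ℝ).2 hcard).trans (hD hab).2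

lemma HasLinearGrowth.card_le_of_injOn (hD : HasLinearGrowth A B (Λ - Λ)) (hA : 0 ≤ A)
    (hΛ : IsSeparatedBy δ Λ) (hδ : 0 < δ) (hc : 0 < c) (hret : HasDenseReturns c Λ)
    (hf : BddAbove (f '' (Λ - Λ))) {T : Finset ℝ} (hT : (T : Set ℝ) ⊆ Λ) (hinj : InjOn f T) :
    (T.card : ℝ) ≤ (2 * A + 1) / c := by
  rcases T.eq_empty_or_nonempty with rfl | hne
  · simp only [Finset.card_empty, Nat.cast_zero]
    positivity
  obtain ⟨ε, hε, hsep⟩ := exists_isSeparatedBy_of_finite (T.finite_toSet.image f)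
  obtain ⟨h, hh, hclose⟩ := exists_forall_abs_sub_lt (hne.to_set.mono hT) hf hε
  obtain ⟨Z, hZ⟩ := isBounded_iff_forall_norm_le.1 T.finite_toSet.isBounded
  have hZ0 : 0 ≤ Z := let ⟨t, ht⟩ := hne; (norm_nonneg t).trans (hZ t ht)
  obtain ⟨r, hcount, hr, hrAB⟩ := ((hD.eventually_le_ncard hret hh).and <|
    (eventually_ge_atTop 1).and (eventually_ge_atTop (2 * A * Z + B))).exists
  have hfin : ({x ∈ Λ | x + h ∈ Λ} ∩ Icc (-r) r).Finite :=
    (hΛ.finite_inter_Icc hδ _ _).subset (inter_subset_inter_left _ (sep_subset _ _))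
  rw [ncard_eq_toFinset_card _ hfin] at hcount
  have hprod := hD.card_mul_card_le (show -(Z + r) ≤ Z + r by linarith) hT
    (P := hfin.toFinset) (fun x hx => (hfin.mem_toFinset.1 hx).1.1)
    (fun t ht x hx => by
      have hxr := (hfin.mem_toFinset.1 hx).2
      have := abs_le.1 (hZ t ht)
      exact ⟨by linarith [hxr.2], by linarith [hxr.1]⟩)
    (fun t ht t' ht' htt' => hsep _ (mem_image_of_mem f ht) _ (mem_image_of_mem f ht')
      (hinj.ne ht ht' htt'))
    (fun x hx x' hx' => hclose x (hfin.mem_toFinset.1 hx).1 x' (hfin.mem_toFinset.1 hx').1)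
  rw [le_div_iff₀ hc]
  refine le_of_mul_le_mul_right ?_ (one_pos.trans_le hr)
  calc T.card * c * r = T.card * (c * r) := mul_assoc _ _ _
    _ ≤ T.card * hfin.toFinset.card := mul_le_mul_of_nonneg_left hcount (Nat.cast_nonneg _)
    _ ≤ A * (Z + r - -(Z + r)) + B := hprod
    _ ≤ (2 * A + 1) * r := by linarith

lemma HasLinearGrowth.finite_image (hD : HasLinearGrowth A B (Λ - Λ)) (hA : 0 ≤ A)
    (hΛ : IsSeparatedBy δ Λ) (hδ : 0 < δ) (hc : 0 < c) (hret : HasDenseReturns c Λ)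
    (hf : BddAbove (f '' (Λ - Λ))) : (f '' Λ).Finite := by
  classical
  refine (finite_and_ncard_le_of_forall_finset (N := (2 * A + 1) / c) fun V hV => ?_).1
  obtain ⟨T, hTΛ, hinj, rfl⟩ := Finset.exists_subset_injOn_image_eq_of_surjOn Λ V hV
  rw [Finset.card_image_of_injOn hinj]
  exact hD.card_le_of_injOn hA hΛ hδ hc hret hf hTΛ hinj

lemma exists_subset_iUnion_range_of_finite_image {l : ℝ} (hl : l ≠ 0)
    (hint : ∀ d ∈ Λ - Λ, f d ∈ range ((↑) : ℤ → ℝ))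
    (hfin : ((f - AddMonoidHom.mulLeft l) '' Λ).Finite) :
    ∃ c > (0 : ℝ), ∃ F : Finset ℝ, Λ ⊆ ⋃ τ ∈ F, range fun m : ℤ => c * m + τ := by
  classical
  obtain ⟨F, hFΛ, -, hF⟩ := Finset.exists_subset_injOn_image_eq_of_surjOn Λ hfin.toFinset
    (hfin.coe_toFinset.symm ▸ surjOn_image (f - AddMonoidHom.mulLeft l) Λ)
  refine ⟨|l|⁻¹, by positivity, F, fun x hx => mem_iUnion₂.2 ?_⟩
  obtain ⟨τ, hτ, hτx⟩ := Finset.mem_image.1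
    (hF ▸ hfin.mem_toFinset.2 (mem_image_of_mem (f - AddMonoidHom.mulLeft l) hx))
  obtain ⟨m, hm⟩ := hint _ (sub_mem_sub hx (hFΛ hτ))
  simp only [AddMonoidHom.sub_apply, AddMonoidHom.coe_mulLeft] at hτx
  rw [map_sub] at hm
  have hmul : l * (x - τ) = m := by linarith
  refine ⟨τ, hτ, ?_⟩
  rcases abs_choice l with habs | habs
  · exact ⟨m, by simp only [habs, ← hmul]; field_simp; ring⟩
  · exact ⟨-m, by simp only [habs, Int.cast_neg, ← hmul]; field_simp; ring⟩

-- A form of Meyer's theorem on Delone sets `Λ` such that `Λ ∩ (Λ - h)` has density at least `c > 0`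
-- for all `h ∈ Λ - Λ`.
theorem exists_subset_iUnion_range_of_hasDenseReturns (hΛ : IsSeparatedBy δ Λ) (hδ : 0 < δ)
    (hdense : ∀ x : ℝ, ∃ l ∈ Λ, |l - x| ≤ R) (hc : 0 < c) (hret : HasDenseReturns c Λ) :
    ∃ c > (0 : ℝ), ∃ F : Finset ℝ, Λ ⊆ ⋃ τ ∈ F, range fun m : ℤ => c * m + τ := by
  obtain ⟨A, hA, B, hD⟩ := exists_hasLinearGrowth_sub hΛ hδ hc hret
  obtain ⟨f, hint, hunbdd⟩ := exists_addMonoidHom_int_of_fg (fg_closure_sub hdense hD)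
    AddSubgroup.subset_closure (not_isBounded_sub_of_dense hdense)
  obtain ⟨l, C, hC⟩ := hD.exists_abs_map_sub_mul_le hdense f
  have hl : l ≠ 0 := by
    rintro rfl
    refine hunbdd (isBounded_iff_forall_norm_le.2 ⟨C, forall_mem_image.2 fun d hd => ?_⟩)
    simpa using hC d hd
  have hbdd : BddAbove ((f - AddMonoidHom.mulLeft l) '' (Λ - Λ)) :=
    ⟨C, forall_mem_image.2 fun d hd => (le_abs_self _).trans (hC d hd)⟩
  exact exists_subset_iUnion_range_of_finite_image hl
    (fun d hd => hint d (AddSubgroup.subset_closure hd))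
    (hD.finite_image hA hΛ hδ hc hret hbdd)

end Lattice

/-- arithmetic structure of the support (Theorem 4.1). -/
theorem stmt_15 (α : TemperedDist) (hΛ : UniformlyDiscrete (TDsupport α))
    (hS : UniformlyDiscrete (TDsupport (fourierTD α))) :
    ∃ cL > (0:ℝ), ∃ F : Finset ℝ,
      TDsupport α ⊆ ⋃ τ ∈ F, Set.range (fun m : ℤ => cL * m + τ) := by
  obtain ⟨δ, hδ, hsepΛ⟩ : ∃ δ > 0, IsSeparatedBy δ (TDsupport α) := hΛ
  obtain ⟨δ', hδ', hsepS⟩ : ∃ δ > 0, IsSeparatedBy δ (TDsupport (fourierTD α)) := hS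
  rcases (TDsupport α).eq_empty_or_nonempty with hempty | hne
  · exact ⟨1, one_pos, ∅, hempty ▸ empty_subset _⟩
  · obtain ⟨R, hdense⟩ := exists_abs_sub_le_of_separated_fourier hδ' hsepS hne
    obtain ⟨c, hc, hret⟩ := exists_lt_ncard_returnSet_inter_Icc hδ hsepΛ hδ' hsepS
    exact exists_subset_iUnion_range_of_hasDenseReturns hsepΛ hδ hdense (half_pos hc)
      (hsepΛ.hasDenseReturns hδ hc hret)
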